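/- Let H be a finite simple graph on h vertices with at least one edge. If there are infinitely many (1/(2h))-near Fermat primes, then the forbidden-subgraph property Q_n^H is evasive for all sufficiently large n. -/

import Mathlib

/-- A deterministic decision tree over a set of Boolean variables indexed by `ι`. -/
inductive DecisionTree (ι : Type) : Type
  | leaf : Bool → DecisionTree ι
  | node : ι → DecisionTree ι → DecisionTree ι → DecisionTree ι

namespace DecisionTree

/-- Evaluate a decision tree on an input assignment. -/
def eval {ι : Type} : DecisionTree ι → (ι → Bool) → Bool
  | leaf b, _ => b
  | node i t f, x => if x i then t.eval x else f.eval x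

/-- The depth (worst-case number of queries) of a decision tree. -/
def depth {ι : Type} : DecisionTree ι → ℕ
  | leaf _ => 0
  | node _ t f => max t.depth f.depth + 1

end DecisionTree

/-- The variables of a graph property on `n` vertices: pairs `i < j`. -/
def EdgeVar (n : ℕ) := {p : Fin n × Fin n // p.1 < p.2}

/-- The graph on `Fin n` determined by an assignment to the adjacency variables. -/
def graphOfInput {n : ℕ} (x : EdgeVar n → Bool) : SimpleGraph (Fin n) :=
  SimpleGraph.fromRel (fun i j => ∃ h : i < j, x ⟨(i, j), h⟩ = true)

/-- The deterministic query (decision-tree) complexity of a set of graphs on `Fin n`,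
viewed as a Boolean function of the adjacency variables. -/
noncomputable def queryComplexity {n : ℕ} (P : Set (SimpleGraph (Fin n))) : ℕ :=
  sInf {d | ∃ T : DecisionTree (EdgeVar n),
    (∀ x, T.eval x = true ↔ graphOfInput x ∈ P) ∧ T.depth ≤ d}

/-- A set of graphs on `Fin n` is evasive if its query complexity is `n(n-1)/2`,
the total number of adjacency variables. -/
def Evasive {n : ℕ} (P : Set (SimpleGraph (Fin n))) : Prop :=
  queryComplexity P = n * (n - 1) / 2

/-- `G` contains a (not necessarily induced) subgraph isomorphic to `H`. -/
def ContainsCopy {V : Type} (H : SimpleGraph V) {W : Type} (G : SimpleGraph W) : Prop :=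
  ∃ f : V → W, Function.Injective f ∧ ∀ v w : V, H.Adj v w → G.Adj (f v) (f w)

/-- The forbidden-subgraph property `Q_n^H`: graphs on `Fin n` containing no copy of `H`. -/
def ForbiddenSubgraphProperty {V : Type} (H : SimpleGraph V) (n : ℕ) :
    Set (SimpleGraph (Fin n)) :=
  {G | ¬ ContainsCopy H G}

/-- A prime `p` is an `ε`-near Fermat prime if `2^s ∣ p - 1` and `(p-1)/2^s ≤ p^ε`
for some `s ≥ 0`. -/
def NearFermatPrime (ε : ℝ) (p : ℕ) : Prop :=
  p.Prime ∧ ∃ s : ℕ, 2 ^ s ∣ p - 1 ∧ (((p - 1) / 2 ^ s : ℕ) : ℝ) ≤ (p : ℝ) ^ ε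

/-!
If the graphs on `n` vertices without a copy of `H` can be decided with fewer than `n(n-1)/2`
queries, then by Kahn, Saks and Sturtevant the complex of the nonempty ones is acyclic over `𝔽₂`.
To refute this, identify the `n` vertices with a disjoint union of finite fields, some of order a
power of `2` and the others of distinct near-Fermat prime orders. The translations of the binary
fields generate an elementary abelian `2`-group, so by Smith theory the graphs it fixes again form
an acyclic complex. The permutation that scales every binary field by a generator and translates
every prime field by `1` acts on that complex, so by Lefschetz and Hopf its fixed points have Euler
characteristic `1`: together with the empty graph, the number of `H`-free graphs fixed by
everything is even.

By the Chinese remainder theorem these graphs are invariant under all translations. Scaling each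
prime field by an element of order `2 ^ s`, where `p - 1 = m * 2 ^ s`, changes the count by an even
number only, and reduces to graphs that are also invariant under a subgroup of units of index `m`.
Since `m ^ (2 * h) ≤ p`, its Cayley graphs contain cliques on `h` vertices, so an `H`-free invariant
graph has no edge inside a field. It is therefore the blow-up of a graph `G` on the set `J` of
fields with no homomorphism from `H`, and for `|J| ≡ 1` modulo `2 ^ 2 ^ t - 1` the number of such
`G` is odd. Near-Fermat primes congruent to `1` modulo `2 ^ 2 ^ t` and binary fields of orders
`2 ^ 2 ^ t` and `2 ^ (2 ^ t + 1)` realise every large `n` with such a `J`.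
-/

section Chains

variable {α β : Type*}

/-- The chains over `𝔽₂` of a family `K` of faces, as functions that vanish outside `K`. -/
def chainSpace (K : Set (Finset α)) : Submodule (ZMod 2) (Finset α → ZMod 2) where
  carrier := {c | ∀ A ∉ K, c A = 0}
  add_mem' hc hd A hA := by simp [hc A hA, hd A hA]
  zero_mem' _ _ := rfl
  smul_mem' r c hc A hA := by simp [hc A hA]

lemma chainSpace_mono {K L : Set (Finset α)} (hKL : K ⊆ L) : chainSpace K ≤ chainSpace L :=
  fun _ hc A hA => hc A fun hAK => hA (hKL hAK)

/-- The pull-back of chains along a bijection of the vertices. -/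
def chainPullback (e : α ≃ β) : (Finset β → ZMod 2) →ₗ[ZMod 2] (Finset α → ZMod 2) :=
  LinearMap.funLeft (ZMod 2) (ZMod 2) fun A => A.map e.toEmbedding

@[simp]
lemma chainPullback_apply (e : α ≃ β) (c : Finset β → ZMod 2) (A : Finset α) :
    chainPullback e c A = c (A.map e.toEmbedding) := rfl

lemma chainPullback_mem_chainSpace {K : Set (Finset α)} {L : Set (Finset β)} (e : α ≃ β)
    (hKL : ∀ A, A.map e.toEmbedding ∈ L → A ∈ K) {c : Finset β → ZMod 2}
    (hc : c ∈ chainSpace L) : chainPullback e c ∈ chainSpace K :=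
  fun A hA => hc _ (mt (hKL A) hA)

variable [DecidableEq α]

/-- The cone over a chain with apex `x`. -/
def coneChain (x : α) (c : Finset α → ZMod 2) (A : Finset α) : ZMod 2 :=
  if x ∈ A then c (A.erase x) else 0

/-- The part of a chain in the link of `x`. -/
def linkChain (x : α) (c : Finset α → ZMod 2) (A : Finset α) : ZMod 2 :=
  if x ∈ A then 0 else c (insert x A)

lemma coneChain_linkChain (x : α) (c : Finset α → ZMod 2) (A : Finset α) :
    coneChain x (linkChain x c) A = if x ∈ A then c A else 0 := by
  unfold coneChain linkChain
  split_ifs with hx <;> simp_all [Finset.insert_erase]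

variable [Fintype α] [Fintype β] [DecidableEq β]

/-- The simplicial boundary of the full simplex on `α` over `𝔽₂`. A chain is a function on finite
sets; the empty set counts as a face, so this is the augmented complex. -/
def simplicialBoundary : (Finset α → ZMod 2) →ₗ[ZMod 2] (Finset α → ZMod 2) where
  toFun c A := ∑ x ∈ Aᶜ, c (insert x A)
  map_add' c d := by ext A; simp [Finset.sum_add_distrib]
  map_smul' r c := by ext A; simp [Finset.mul_sum]

lemma simplicialBoundary_apply (c : Finset α → ZMod 2) (A : Finset α) :
    simplicialBoundary c A = ∑ x ∈ Aᶜ, c (insert x A) := rfl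

lemma simplicialBoundary_simplicialBoundary (c : Finset α → ZMod 2) :
    simplicialBoundary (simplicialBoundary c) = 0 := by
  ext A
  simp only [simplicialBoundary_apply, Pi.zero_apply, Finset.sum_sigma']
  refine Finset.sum_involution (fun z _ => ⟨z.2, z.1⟩) ?_ ?_ ?_ fun _ _ => rfl
  · rintro ⟨x, y⟩ -
    rw [Finset.insert_comm y x]
    exact CharTwo.add_self_eq_zero _
  · rintro ⟨x, y⟩ hxy -
    simp only [Finset.mem_sigma, Finset.mem_compl, Finset.mem_insert, not_or] at hxy
    simp [hxy.2.1]
  · rintro ⟨x, y⟩ hxy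
    simp only [Finset.mem_sigma, Finset.mem_compl, Finset.mem_insert, not_or] at hxy ⊢
    exact ⟨hxy.2.2, Ne.symm hxy.2.1, hxy.1⟩

lemma simplicialBoundary_chainPullback (e : α ≃ β) (c : Finset β → ZMod 2) :
    simplicialBoundary (chainPullback e c) = chainPullback e (simplicialBoundary c) := by
  ext A
  simp only [simplicialBoundary_apply, chainPullback_apply, Finset.map_insert]
  exact Finset.sum_equiv e (by simp) fun _ _ => rfl

lemma simplicialBoundary_coneChain (x : α) (c : Finset α → ZMod 2) :
    simplicialBoundary (coneChain x c) = c + coneChain x (simplicialBoundary c) := by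
  ext A
  simp only [simplicialBoundary_apply, coneChain, Pi.add_apply]
  by_cases hx : x ∈ A
  · have hcompl : (A.erase x)ᶜ = insert x Aᶜ := Finset.compl_erase
    have hswap : ∀ z ∈ Aᶜ, (if x ∈ insert z A then c ((insert z A).erase x) else 0) =
        c (insert z (A.erase x)) := fun z hz => by
      have hzx : z ≠ x := by rintro rfl; exact Finset.mem_compl.1 hz hx
      rw [if_pos (Finset.mem_insert_of_mem hx), Finset.erase_insert_of_ne hzx]
    rw [Finset.sum_congr rfl hswap, if_pos hx, hcompl, Finset.sum_insert (by simpa using hx),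
      Finset.insert_erase hx, ← add_assoc, CharTwo.add_self_eq_zero, zero_add]
  · rw [if_neg hx, add_zero, Finset.sum_eq_single_of_mem x (Finset.mem_compl.2 hx)]
    · simp [hx]
    · intro z _ hzx
      rw [if_neg (by simp [hx, hzx.symm])]

lemma simplicialBoundary_linkChain (x : α) (c : Finset α → ZMod 2) :
    simplicialBoundary (linkChain x c) = linkChain x (simplicialBoundary c) := by
  ext A
  simp only [simplicialBoundary_apply, linkChain]
  by_cases hx : x ∈ A
  · simp [hx]
  · have hcompl : Aᶜ = insert x (insert x A)ᶜ := by
      rw [Finset.compl_insert, Finset.insert_erase (Finset.mem_compl.2 hx)]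
    rw [if_neg hx, hcompl, Finset.sum_insert (by simp), if_pos (Finset.mem_insert_self x A),
      zero_add]
    refine Finset.sum_congr rfl fun z hz => ?_
    simp only [Finset.mem_compl, Finset.mem_insert, not_or] at hz
    rw [if_neg (by simp [hx, Ne.symm hz.1]), Finset.insert_comm]

lemma simplicialBoundary_mem_chainSpace {K : Set (Finset α)} (hK : IsLowerSet K)
    {c : Finset α → ZMod 2} (hc : c ∈ chainSpace K) : simplicialBoundary c ∈ chainSpace K :=
  fun A hA => Finset.sum_eq_zero fun x _ => hc _ fun h => hA (hK (Finset.subset_insert x A) h)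

/-- Vanishing of the reduced `𝔽₂`-homology of the simplicial complex with faces `K`. -/
def AcyclicComplex (K : Set (Finset α)) : Prop :=
  ∀ c ∈ chainSpace K, simplicialBoundary c = 0 → ∃ d ∈ chainSpace K, simplicialBoundary d = c

lemma acyclicComplex_of_cone {K : Set (Finset α)} (y : α) (hy : ∀ A ∈ K, insert y A ∈ K) :
    AcyclicComplex K := by
  refine fun c hc hcycle => ⟨coneChain y c, fun A hA => ?_, ?_⟩
  · unfold coneChain
    split_ifs with h
    · exact hc _ fun hA' => hA (Finset.insert_erase h ▸ hy _ hA')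
    · rfl
  · ext A
    simp [simplicialBoundary_coneChain, hcycle, coneChain]

lemma acyclicComplex_of_deletion_of_link {K : Set (Finset α)} (hK : IsLowerSet K) (x : α)
    (hdel : AcyclicComplex {A | A ∈ K ∧ x ∉ A})
    (hlink : AcyclicComplex {A | insert x A ∈ K ∧ x ∉ A}) : AcyclicComplex K := by
  intro c hc hcycle
  obtain ⟨d, hd, hdc⟩ := hlink (linkChain x c) (fun A hA => by
      unfold linkChain
      split_ifs with h
      · rfl
      · exact hc _ fun hA' => hA ⟨hA', h⟩)
    (by ext A; simp [simplicialBoundary_linkChain, hcycle, linkChain])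
  have hcone : coneChain x d ∈ chainSpace K := fun A hA => by
    unfold coneChain
    split_ifs with h
    · exact hd _ fun hA' => hA (Finset.insert_erase h ▸ hA'.1)
    · rfl
  -- Adding the boundary of the cone over `d` pushes the cycle `c` off the vertex `x`.
  obtain ⟨d', hd', hd'c⟩ := hdel (c + simplicialBoundary (coneChain x d)) (fun A hA => by
      rw [simplicialBoundary_coneChain, hdc, Pi.add_apply, Pi.add_apply, coneChain_linkChain]
      split_ifs with h
      · rw [hd A fun hA' => hA'.2 h, zero_add, CharTwo.add_self_eq_zero]
      · have hAK : A ∉ K := fun hA' => hA ⟨hA', h⟩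
        rw [hc A hAK, hd A fun hA' => hAK (hK (Finset.subset_insert x A) hA'.1), add_zero,
          add_zero])
    (by rw [map_add, hcycle, simplicialBoundary_simplicialBoundary, add_zero])
  refine ⟨d' + coneChain x d, add_mem (chainSpace_mono (fun A hA => hA.1) hd') hcone, ?_⟩
  rw [map_add, hd'c, add_assoc, CharTwo.add_self_eq_zero, add_zero]

lemma AcyclicComplex.of_equiv {K : Set (Finset α)} {L : Set (Finset β)} (e : α ≃ β)
    (hKL : ∀ A, A.map e.toEmbedding ∈ L ↔ A ∈ K) (hK : AcyclicComplex K) : AcyclicComplex L := by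
  intro c hc hcycle
  have hinv : ∀ c, chainPullback e.symm (chainPullback e c) = c := fun c => by
    ext B
    simp [Finset.map_map]
  obtain ⟨d, hd, hdc⟩ := hK (chainPullback e c)
    (chainPullback_mem_chainSpace e (fun A => (hKL A).1) hc)
    (by rw [simplicialBoundary_chainPullback, hcycle, map_zero])
  refine ⟨chainPullback e.symm d, chainPullback_mem_chainSpace e.symm (fun B hB => ?_) hd, ?_⟩
  · simpa [Finset.map_map] using (hKL _).2 hB
  · rw [simplicialBoundary_chainPullback, hdc, hinv]

end Chains

section OrderComplex

variable {α β : Type*} [PartialOrder α] [PartialOrder β]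

/-- The faces of the order complex of a subset `S` of a poset: the finite chains in `S`. -/
def orderComplex (S : Set α) : Set (Finset α) :=
  {A | (A : Set α) ⊆ S ∧ IsChain (· ≤ ·) (A : Set α)}

lemma isLowerSet_orderComplex (S : Set α) : IsLowerSet (orderComplex S) := fun _ _ hBA hA =>
  ⟨(Finset.coe_subset.2 hBA).trans hA.1, hA.2.mono (Finset.coe_subset.2 hBA)⟩

lemma map_mem_orderComplex_iff (e : α ≃o β) {S : Set β} {A : Finset α} :
    A.map e.toEquiv.toEmbedding ∈ orderComplex S ↔ A ∈ orderComplex (e ⁻¹' S) := by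
  have hchain : IsChain (· ≤ ·) (e '' A) ↔ IsChain (· ≤ ·) (A : Set α) :=
    IsChain.image_relIso_iff (φ := e)
  have hcoe : ((A.map e.toEquiv.toEmbedding : Finset β) : Set β) = e '' A := by simp
  simp only [orderComplex, Set.mem_ofPred_eq, hcoe, hchain, Set.image_subset_iff]

lemma deletion_orderComplex (S : Set α) (x : α) :
    {A | A ∈ orderComplex S ∧ x ∉ A} = orderComplex (S \ {x}) := by
  ext A
  simp only [orderComplex, Set.mem_ofPred_eq, Set.subset_sdiff, Set.disjoint_singleton_right,
    Finset.mem_coe]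
  tauto

variable [DecidableEq α]

lemma link_orderComplex {S : Set α} {x : α} (hx : x ∈ S) :
    {A | insert x A ∈ orderComplex S ∧ x ∉ A} = orderComplex {y | y ∈ S ∧ (y < x ∨ x < y)} := by
  ext A
  simp only [orderComplex, Set.mem_ofPred_eq, Finset.coe_insert]
  constructor
  · rintro ⟨⟨hAS, hA⟩, hxA⟩
    refine ⟨fun z hz => ⟨hAS (Set.mem_insert_of_mem x hz), ?_⟩, hA.mono (Set.subset_insert x _)⟩
    have hzx : z ≠ x := fun h => hxA (h ▸ hz)
    exact (hA (Set.mem_insert_of_mem x hz) (Set.mem_insert x _) hzx).imp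
      (lt_of_le_of_ne · hzx) (lt_of_le_of_ne · hzx.symm)
  · rintro ⟨hAS, hA⟩
    refine ⟨⟨Set.insert_subset hx fun z hz => (hAS hz).1, hA.insert fun z hz _ => ?_⟩,
      fun h => ?_⟩
    · exact (hAS hz).2.symm.imp le_of_lt le_of_lt
    · exact (hAS h).2.elim (lt_irrefl x) (lt_irrefl x)

variable [Fintype α] [Fintype β] [DecidableEq β]

lemma AcyclicComplex.of_orderIso (e : α ≃o β) {S : Set β}
    (hS : AcyclicComplex (orderComplex (e ⁻¹' S))) : AcyclicComplex (orderComplex S) :=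
  hS.of_equiv e.toEquiv fun _ => map_mem_orderComplex_iff e

lemma acyclicComplex_orderComplex_of_comparable {S : Set α} {y : α} (hy : y ∈ S)
    (hcomp : ∀ x ∈ S, x ≤ y ∨ y ≤ x) : AcyclicComplex (orderComplex S) := by
  refine acyclicComplex_of_cone y fun A hA => ?_
  rw [orderComplex, Set.mem_ofPred_eq, Finset.coe_insert]
  exact ⟨Set.insert_subset hy hA.1, hA.2.insert fun x hx _ => (hcomp x (hA.1 hx)).symm⟩

lemma acyclicComplex_orderComplex_of_sdiff_singleton {S : Set α} {x : α} (hx : x ∈ S)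
    (hdel : AcyclicComplex (orderComplex (S \ {x})))
    (hlink : AcyclicComplex (orderComplex {y | y ∈ S ∧ (y < x ∨ x < y)})) :
    AcyclicComplex (orderComplex S) :=
  acyclicComplex_of_deletion_of_link (isLowerSet_orderComplex S) x
    (by rwa [deletion_orderComplex]) (by rwa [link_orderComplex hx])

lemma acyclicComplex_orderComplex_union {S : Set α} (hS : AcyclicComplex (orderComplex S))
    (R : Finset α) (hSR : ∀ x ∈ R, x ∉ S)
    (hlink : ∀ x ∈ R, AcyclicComplex
      (orderComplex {y | (y ∈ S ∧ (y < x ∨ x < y)) ∨ (y ∈ R ∧ x < y)})) :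
    AcyclicComplex (orderComplex (S ∪ R)) := by
  induction R using Finset.strongInduction with
  | H R ih =>
    obtain rfl | hR := R.eq_empty_or_nonempty
    · simpa using hS
    obtain ⟨x, hxR, hmin⟩ := R.exists_minimal hR
    have hlt : ∀ y ∈ R, ¬ y < x := fun y hy hyx => hyx.not_ge (hmin hy hyx.le)
    refine acyclicComplex_orderComplex_of_sdiff_singleton (Or.inr hxR) ?_ ?_
    · have herase : (S ∪ R) \ {x} = S ∪ (R.erase x : Finset α) := by
        rw [Set.union_sdiff_distrib, Set.sdiff_singleton_eq_self (hSR x hxR), Finset.coe_erase]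
      rw [herase]
      refine ih _ (Finset.erase_ssubset hxR) (fun y hy => hSR y (Finset.mem_of_mem_erase hy))
        fun y hy => ?_
      have hy := Finset.mem_erase.1 hy
      convert hlink y hy.2 using 5
      simp only [Finset.mem_erase]
      have : ∀ z, y < z → z ≠ x := fun z hyz hzx => hlt y hy.2 (hzx ▸ hyz)
      grind
    · convert hlink x hxR using 4
      simp only [Set.mem_union, Finset.mem_coe]
      grind

end OrderComplex

section Smith

variable {α : Type*} {σ : Equiv.Perm α} {K : Set (Finset α)}

/-- The faces in `K` all of whose vertices are fixed by `σ`. -/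
def fixedFaces (σ : Equiv.Perm α) (K : Set (Finset α)) : Set (Finset α) :=
  {A | A ∈ K ∧ ∀ x ∈ A, σ x = x}

lemma isLowerSet_fixedFaces (hK : IsLowerSet K) : IsLowerSet (fixedFaces σ K) :=
  fun _ _ hBA hA => ⟨hK hBA hA.1, fun x hx => hA.2 x (hBA hx)⟩

lemma map_eq_self_of_forall_apply_eq {A : Finset α} (hA : ∀ x ∈ A, σ x = x) :
    A.map σ.toEmbedding = A :=
  Finset.eq_of_subset_of_card_le (fun y hy => by
    obtain ⟨x, hx, rfl⟩ := Finset.mem_map.1 hy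
    simpa [hA x hx] using hx) (Finset.card_map _).ge

lemma map_map_of_involutive (hσ : Function.Involutive σ) (A : Finset α) :
    (A.map σ.toEmbedding).map σ.toEmbedding = A := by
  rw [Finset.map_map]
  exact Finset.eq_of_subset_of_card_le (fun y hy => by
    obtain ⟨x, hx, rfl⟩ := Finset.mem_map.1 hy
    simpa [hσ x] using hx) (Finset.card_map _).ge

lemma chainPullback_chainPullback_of_involutive (hσ : Function.Involutive σ)
    (c : Finset α → ZMod 2) : chainPullback σ (chainPullback σ c) = c := by
  ext A
  simp only [chainPullback_apply, map_map_of_involutive hσ]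

lemma chainPullback_eq_self_of_mem_fixedFaces (hσ : Function.Involutive σ)
    {c : Finset α → ZMod 2} (hc : c ∈ chainSpace (fixedFaces σ K)) : chainPullback σ c = c := by
  ext A
  by_cases hA : ∀ x ∈ A, σ x = x
  · rw [chainPullback_apply, map_eq_self_of_forall_apply_eq hA]
  · rw [chainPullback_apply, hc A fun h => hA h.2]
    refine hc _ fun h => hA fun x hx => ?_
    simpa [hσ x, eq_comm] using h.2 (σ x) (by simpa using hx)

open Classical in
/-- A chain invariant under an involution acting regularly is, up to a chain of fixed faces, a sum
over orbits: keep one face from each orbit of size two. -/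
lemma exists_eq_add_chainPullback_add (hσ : Function.Involutive σ)
    (hreg : ∀ A ∈ K, A.map σ.toEmbedding = A → ∀ x ∈ A, σ x = x) {v : Finset α → ZMod 2}
    (hv : v ∈ chainSpace K) (hinv : chainPullback σ v = v) :
    ∃ f ∈ chainSpace K, ∃ w ∈ chainSpace (fixedFaces σ K), v = f + chainPullback σ f + w := by
  refine ⟨fun A => if WellOrderingRel A (A.map σ.toEmbedding) then v A else 0, fun A hA => ?_,
    fun A => if A.map σ.toEmbedding = A then v A else 0, fun A hA => ?_, ?_⟩
  · simp [hv A hA]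
  · exact ite_eq_right_iff.2 fun h => hv A fun hAK => hA ⟨hAK, hreg A hAK h⟩
  · ext A
    have hA : v (A.map σ.toEmbedding) = v A := congr_fun hinv A
    simp only [Pi.add_apply, chainPullback_apply, map_map_of_involutive hσ, hA]
    rcases trichotomous_of WellOrderingRel A (A.map σ.toEmbedding) with h | h | h
    · have hne : A.map σ.toEmbedding ≠ A := (ne_of_irrefl h).symm
      simp [h, asymm_of WellOrderingRel h, hne]
    · simp [← h, irrefl_of WellOrderingRel A]
    · have hne : A.map σ.toEmbedding ≠ A := ne_of_irrefl h
      simp [h, asymm_of WellOrderingRel h, hne]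

variable [Fintype α]

variable [DecidableEq α]

lemma simplicialBoundary_apply_of_mem_fixedFaces (f w : Finset α → ZMod 2) {A : Finset α}
    (hA : A ∈ fixedFaces σ K) :
    simplicialBoundary (f + chainPullback σ f + w) A = simplicialBoundary w A := by
  simp only [map_add, simplicialBoundary_chainPullback, Pi.add_apply, chainPullback_apply,
    map_eq_self_of_forall_apply_eq hA.2, CharTwo.add_self_eq_zero, zero_add]

lemma AcyclicComplex.exists_primitive_of_card_lt (hK : AcyclicComplex K)
    {x : Finset α → ZMod 2} (hx : x ∈ chainSpace K) (hcycle : simplicialBoundary x = 0) {m : ℕ}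
    (hm : ∀ A, A.card < m → x A = 0) :
    ∃ v ∈ chainSpace K, (∀ A, A.card < m + 1 → v A = 0) ∧ simplicialBoundary v = x := by
  obtain ⟨v, hv, hvx⟩ := hK x hx hcycle
  refine ⟨fun A => if A.card < m + 1 then 0 else v A, fun A hA => by simp [hv A hA],
    fun A hA => if_pos hA, ?_⟩
  ext A
  rw [simplicialBoundary_apply]
  by_cases hA : A.card < m
  · rw [hm A hA]
    refine Finset.sum_eq_zero fun y hy => if_pos ?_
    rw [Finset.card_insert_of_notMem (Finset.mem_compl.1 hy)]
    lia
  · rw [← hvx, simplicialBoundary_apply]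
    refine Finset.sum_congr rfl fun y hy => if_neg ?_
    rw [Finset.card_insert_of_notMem (Finset.mem_compl.1 hy)]
    lia

/-- Downward induction on the degree: a primitive `v` of `x` is corrected by a boundary, found by
decomposing an invariant primitive of `v + σ v`. -/
lemma AcyclicComplex.exists_invariant_primitive (hK : AcyclicComplex K) (hlower : IsLowerSet K)
    (hσ : Function.Involutive σ) (hσK : ∀ A, A.map σ.toEmbedding ∈ K → A ∈ K)
    (hreg : ∀ A ∈ K, A.map σ.toEmbedding = A → ∀ x ∈ A, σ x = x) (k : ℕ)
    {x : Finset α → ZMod 2} (hx : x ∈ chainSpace K) (hcycle : simplicialBoundary x = 0)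
    (hinv : chainPullback σ x = x) (hk : ∀ A, A.card < Fintype.card α + 1 - k → x A = 0) :
    ∃ v ∈ chainSpace K, chainPullback σ v = v ∧ simplicialBoundary v = x := by
  induction k generalizing x with
  | zero =>
    have hx0 : x = 0 := funext fun A => hk A (Nat.lt_succ_of_le (Finset.card_le_univ A))
    exact ⟨0, zero_mem _, map_zero _, by rw [map_zero, hx0]⟩
  | succ k ih =>
    obtain ⟨v, hv, hvm, hvx⟩ := hK.exists_primitive_of_card_lt hx hcycle hk
    have hσv := chainPullback_mem_chainSpace σ hσK hv
    obtain ⟨y, hy, hyinv, hyv⟩ := ih (x := v + chainPullback σ v) (add_mem hv hσv)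
      (by
        rw [map_add, simplicialBoundary_chainPullback, hvx, hinv]
        exact CharTwo.add_self_eq_zero x)
      (by rw [map_add, chainPullback_chainPullback_of_involutive hσ, add_comm])
      (fun A hA => by
        rw [Pi.add_apply, chainPullback_apply, hvm A (by lia),
          hvm _ (by rw [Finset.card_map]; lia), add_zero])
    obtain ⟨f, hf, w, hw, rfl⟩ := exists_eq_add_chainPullback_add hσ hreg hy hyinv
    have hw0 : simplicialBoundary w = 0 := by
      ext A
      by_cases hA : A ∈ fixedFaces σ K
      · rw [← simplicialBoundary_apply_of_mem_fixedFaces f w hA, hyv, Pi.add_apply,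
          chainPullback_apply, map_eq_self_of_forall_apply_eq hA.2]
        exact CharTwo.add_self_eq_zero _
      · exact simplicialBoundary_mem_chainSpace (isLowerSet_fixedFaces hlower) hw A hA
    rw [map_add, hw0, add_zero, map_add, simplicialBoundary_chainPullback] at hyv
    refine ⟨v + simplicialBoundary f,
      add_mem hv (simplicialBoundary_mem_chainSpace hlower hf), ?_, ?_⟩
    · rw [map_add]
      linear_combination CharTwo.add_self_eq_zero (chainPullback σ (simplicialBoundary f)) -
        CharTwo.add_self_eq_zero v - hyv
    · rw [map_add, simplicialBoundary_simplicialBoundary, add_zero, hvx]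

/-- Smith's theorem for an involution acting regularly. -/
theorem acyclicComplex_fixedFaces (hK : AcyclicComplex K) (hlower : IsLowerSet K)
    (hσ : Function.Involutive σ) (hσK : ∀ A, A.map σ.toEmbedding ∈ K → A ∈ K)
    (hreg : ∀ A ∈ K, A.map σ.toEmbedding = A → ∀ x ∈ A, σ x = x) :
    AcyclicComplex (fixedFaces σ K) := by
  intro c hc hcycle
  obtain ⟨v, hv, hvinv, hvc⟩ := hK.exists_invariant_primitive hlower hσ hσK hreg
    (Fintype.card α + 1) (chainSpace_mono (fun A hA => hA.1) hc) hcycle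
    (chainPullback_eq_self_of_mem_fixedFaces hσ hc) (fun A hA => by simp at hA)
  obtain ⟨f, -, w, hw, rfl⟩ := exists_eq_add_chainPullback_add hσ hreg hv hvinv
  refine ⟨w, hw, funext fun A => ?_⟩
  by_cases hA : A ∈ fixedFaces σ K
  · rw [← hvc, simplicialBoundary_apply_of_mem_fixedFaces f w hA]
  · rw [hc A hA, simplicialBoundary_mem_chainSpace (isLowerSet_fixedFaces hlower) hw A hA]

end Smith

section FixedOrderComplex

variable {α : Type*} [PartialOrder α] [Finite α]

lemma apply_eq_self_of_comparable (g : α ≃o α) {x : α} (hx : x ≤ g x ∨ g x ≤ x) : g x = x := by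
  rcases hx with hx | hx
  · refine hx.eq_or_lt.elim Eq.symm fun hlt => ?_
    exact absurd (g.strictMono.strictMono_iterate_of_lt_map hlt).injective
      (not_injective_infinite_finite _)
  · refine hx.eq_or_lt.elim id fun hlt => ?_
    exact absurd (g.strictMono.strictAnti_iterate_of_map_lt hlt).injective
      (not_injective_infinite_finite _)

lemma map_eq_self_iff_of_isChain (g : α ≃o α) {A : Finset α}
    (hA : IsChain (· ≤ ·) (A : Set α)) :
    A.map g.toEquiv.toEmbedding = A ↔ ∀ x ∈ A, g x = x := by
  refine ⟨fun h x hx => apply_eq_self_of_comparable g (hA.total hx ?_),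
    map_eq_self_of_forall_apply_eq⟩
  rw [Finset.mem_coe, ← h]
  exact Finset.mem_map_of_mem _ hx

end FixedOrderComplex

section FixedPoints

variable {α : Type*} [PartialOrder α] [Fintype α] [DecidableEq α]

lemma AcyclicComplex.orderComplex_fixed {S : Set α} (hS : AcyclicComplex (orderComplex S))
    {σ : α ≃o α} (hσ : Function.Involutive σ) (hσS : ∀ x, σ x ∈ S ↔ x ∈ S) :
    AcyclicComplex (orderComplex {x | x ∈ S ∧ σ x = x}) := by
  have hpre : σ ⁻¹' S = S := Set.ext hσS
  have hfix : fixedFaces σ.toEquiv (orderComplex S) = orderComplex {x | x ∈ S ∧ σ x = x} := by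
    ext A
    refine ⟨fun hA => ⟨fun x hx => ⟨hA.1.1 hx, hA.2 x hx⟩, hA.1.2⟩, fun hA => ?_⟩
    exact ⟨⟨fun x hx => (hA.1 hx).1, hA.2⟩, fun x hx => (hA.1 hx).2⟩
  rw [← hfix]
  refine acyclicComplex_fixedFaces hS (isLowerSet_orderComplex S) hσ (fun A hA => ?_)
    fun A hA => (map_eq_self_iff_of_isChain σ hA.2).1
  rwa [map_mem_orderComplex_iff, hpre] at hA

lemma AcyclicComplex.orderComplex_forall_fixed {S : Set α}
    (hS : AcyclicComplex (orderComplex S)) (P : Finset (α ≃o α))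
    (hP : ∀ σ ∈ P, Function.Involutive σ) (hcomm : ∀ σ ∈ P, ∀ τ ∈ P, Function.Commute σ τ)
    (hPS : ∀ σ ∈ P, ∀ x, σ x ∈ S ↔ x ∈ S) :
    AcyclicComplex (orderComplex {x | x ∈ S ∧ ∀ σ ∈ P, σ x = x}) := by
  classical
  induction P using Finset.induction_on with
  | empty => simpa using hS
  | insert τ P _ ih =>
    simp only [Finset.forall_mem_insert] at hP hcomm hPS ⊢
    have ih := ih hP.2 (fun σ hσ => (hcomm.2 σ hσ).2) hPS.2
    convert ih.orderComplex_fixed hP.1 (fun x => ?_) using 3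
    · ext x
      simp only [Set.mem_ofPred_eq]
      tauto
    · refine and_congr (hPS.1 x) (forall₂_congr fun σ hσ => ?_)
      rw [(hcomm.2 σ hσ).1 x, τ.injective.eq_iff]

end FixedPoints

section Lefschetz

lemma trace_eq_zero_of_ker_eq_range {F M : Type*} [Field F] [CharP F 2] [AddCommGroup M]
    [Module F M] {d g : M →ₗ[F] M} (hd : LinearMap.ker d = LinearMap.range d)
    (hcomm : Commute g d) : LinearMap.trace F M g = 0 := by
  obtain ⟨r, hr⟩ := d.rangeRestrict.exists_rightInverse_of_surjective d.range_rangeRestrict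
  obtain ⟨R, hR⟩ := LinearMap.exists_extend r
  have hdR : ∀ x ∈ LinearMap.ker d, d (R x) = x := fun x hx => by
    have hx : x ∈ LinearMap.range d := hd ▸ hx
    rw [show R x = r ⟨x, hx⟩ from LinearMap.congr_fun hR ⟨x, hx⟩]
    exact congr_arg Subtype.val (LinearMap.congr_fun hr ⟨x, hx⟩)
  have hdd : d * d = 0 := LinearMap.ext fun x => by
    simpa [← hd] using LinearMap.mem_range_self d x
  -- `s` is a contracting homotopy.
  let s := R * (1 - R * d)
  have hhomotopy : d * s + s * d = 1 := LinearMap.ext fun x => by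
    have hx : x - R (d x) ∈ LinearMap.ker d := by
      have hdx : d x ∈ LinearMap.ker d := LinearMap.congr_fun hdd x
      rw [LinearMap.mem_ker, map_sub, hdR _ hdx, sub_self]
    have hddx : d (d x) = 0 := LinearMap.congr_fun hdd x
    have hdRx := hdR _ hx
    simp only [map_sub] at hdRx
    simp [s, hddx, hdRx]
  calc LinearMap.trace F M g = LinearMap.trace F M (d * (g * s) + g * s * d) := by
        rw [← mul_assoc, ← hcomm.eq, mul_assoc, mul_assoc, ← mul_add, hhomotopy, mul_one]
    _ = 0 := by rw [map_add, LinearMap.trace_mul_comm, CharTwo.add_self_eq_zero]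

variable {α : Type*} [Fintype α] [DecidableEq α]

/-- The Lefschetz fixed-face count: over `𝔽₂` the trace on chains is the number of invariant
faces. -/
theorem AcyclicComplex.even_ncard_map_eq_self {K : Set (Finset α)} (hK : AcyclicComplex K)
    (hlower : IsLowerSet K) (g : Equiv.Perm α) (hg : ∀ A, A.map g.toEmbedding ∈ K ↔ A ∈ K) :
    Even {A | A ∈ K ∧ A.map g.toEmbedding = A}.ncard := by
  classical
  let f : (Finset α → ZMod 2) →ₗ[ZMod 2] (Finset α → ZMod 2) :=
    LinearMap.pi fun A => if A ∈ K then LinearMap.proj (A.map g.toEmbedding) else 0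
  have hf_apply : ∀ c A, f c A = if A ∈ K then c (A.map g.toEmbedding) else 0 := fun c A => by
    by_cases hA : A ∈ K <;> simp [f, hA]
  have hf : ∀ c, f c ∈ chainSpace K := fun c A hA => by rw [hf_apply, if_neg hA]
  have hfg : ∀ c ∈ chainSpace K, f c = chainPullback g c := fun c hc => by
    ext A
    rw [hf_apply, chainPullback_apply]
    exact ite_eq_left_iff.2 fun hA => (hc _ (mt (hg A).1 hA)).symm
  let d := (simplicialBoundary (α := α)).restrict fun _ =>
    simplicialBoundary_mem_chainSpace (K := K) hlower
  have hd : LinearMap.ker d = LinearMap.range d := by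
    ext ⟨c, hc⟩
    rw [LinearMap.mem_ker, LinearMap.mem_range]
    constructor
    · intro h
      obtain ⟨b, hb, hbc⟩ := hK c hc (congr_arg Subtype.val h)
      exact ⟨⟨b, hb⟩, Subtype.ext hbc⟩
    · rintro ⟨b, hb⟩
      rw [← hb]
      exact Subtype.ext (simplicialBoundary_simplicialBoundary _)
  have hcomm : Commute (f.restrict fun c _ => hf c) d := LinearMap.ext fun c => Subtype.ext <| by
    simp [d, hfg _ c.2, hfg _ (simplicialBoundary_mem_chainSpace hlower c.2),
      simplicialBoundary_chainPullback]
  have htrace : LinearMap.trace (ZMod 2) _ f = 0 := by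
    rw [← LinearMap.trace_restrict_eq_of_forall_mem _ f hf]
    exact trace_eq_zero_of_ker_eq_range hd hcomm
  rw [LinearMap.trace_eq_matrix_trace (ZMod 2) (Pi.basisFun (ZMod 2) (Finset α))] at htrace
  rw [← ZMod.natCast_eq_zero_iff_even, ← htrace, Set.ncard_eq_toFinset_card', Matrix.trace]
  simp [hf_apply, Pi.single_apply, ← ite_and, Finset.sum_boole]

end Lefschetz

section ChainParity

section PartialOrder

variable {α : Type*} [PartialOrder α]

lemma ncard_orderComplex_eq_add [Finite α] {S : Set α} {x : α} (hx : x ∈ S) :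
    (orderComplex S).ncard =
      (orderComplex (S \ {x})).ncard + (orderComplex {y | y ∈ S ∧ (y < x ∨ x < y)}).ncard := by
  classical
  have hstar : {A | A ∈ orderComplex S ∧ x ∈ A} =
      insert x '' {A | insert x A ∈ orderComplex S ∧ x ∉ A} := by
    ext A
    refine ⟨fun hA => ⟨A.erase x, ?_, Finset.insert_erase hA.2⟩, ?_⟩
    · simpa [Finset.insert_erase hA.2] using hA.1
    · rintro ⟨B, hB, rfl⟩
      exact ⟨hB.1, Finset.mem_insert_self x B⟩
  have hinj : Set.InjOn (insert x) {A : Finset α | insert x A ∈ orderComplex S ∧ x ∉ A} :=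
    fun A hA B hB hAB => by
      rw [← Finset.erase_insert hA.2, ← Finset.erase_insert hB.2]
      exact congr_arg (Finset.erase · x) hAB
  rw [← deletion_orderComplex, ← link_orderComplex hx, ← hinj.ncard_image, ← hstar,
    ← Set.ncard_union_eq (Set.disjoint_left.2 fun A hA hA' => hA.2 hA'.2)]
  congr 1
  ext A
  simp only [Set.mem_union, Set.mem_ofPred_eq]
  tauto

lemma even_ncard_orderComplex_fixed [Fintype α] [DecidableEq α] {S : Set α}
    (hS : AcyclicComplex (orderComplex S)) (g : α ≃o α) (hg : ∀ x, g x ∈ S ↔ x ∈ S) :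
    Even (orderComplex {x | x ∈ S ∧ g x = x}).ncard := by
  have hpre : g ⁻¹' S = S := Set.ext hg
  convert hS.even_ncard_map_eq_self (isLowerSet_orderComplex S) g.toEquiv
    (fun A => by rw [map_mem_orderComplex_iff, hpre]) using 2
  ext A
  refine ⟨fun hA => ?_, fun hA => ?_⟩
  · exact ⟨⟨fun x hx => (hA.1 hx).1, hA.2⟩,
      (map_eq_self_iff_of_isChain g hA.2).2 fun x hx => (hA.1 hx).2⟩
  · exact ⟨fun x hx => ⟨hA.1.1 hx, (map_eq_self_iff_of_isChain g hA.1.2).1 hA.2 x hx⟩, hA.1.2⟩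

end PartialOrder

section GeneralizedBooleanAlgebra

variable {α : Type*} [GeneralizedBooleanAlgebra α] [Finite α]

/-- Relative complementation in `x` has no fixed point strictly between `⊥` and `x`. -/
lemma even_ncard_Ioo_bot {Z : Set α} (hZ : ∀ x ∈ Z, ∀ y ∈ Z, x \ y ∈ Z) {x : α} (hx : x ∈ Z) :
    Even (Z ∩ Set.Ioo ⊥ x).ncard := by
  classical
  have := Fintype.ofFinite α
  rw [← ZMod.natCast_eq_zero_iff_even, Set.ncard_eq_toFinset_card', Finset.card_eq_sum_ones,
    Nat.cast_sum]
  refine Finset.sum_involution (fun y _ => x \ y) (fun _ _ => by decide) ?_ ?_ ?_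
  · intro y hy _ hxy
    have hy : y ∈ Z ∩ Set.Ioo ⊥ x := by simpa using hy
    have hdisj : Disjoint y y := by simpa [hxy] using disjoint_sdiff_self_left (x := y) (y := x)
    exact hy.2.1.ne' (disjoint_self.1 hdisj)
  · intro y hy
    have hy : y ∈ Z ∩ Set.Ioo ⊥ x := by simpa using hy
    have hbot : ⊥ < x \ y := bot_lt_iff_ne_bot.2 fun h => hy.2.2.not_ge (sdiff_eq_bot_iff.1 h)
    have hlt : x \ y < x := sdiff_le.lt_of_ne fun h =>
      hy.2.1.ne' ((sdiff_eq_self_iff_disjoint.1 h).eq_bot_of_le hy.2.2.le)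
    simpa using ⟨hZ x hx y hy.1, hbot, hlt⟩
  · intro y hy
    have hy : y ∈ Z ∩ Set.Ioo ⊥ x := by simpa using hy
    exact sdiff_sdiff_eq_self hy.2.2.le

/-- Peeling off a maximal element `x`, the chains through `x` correspond to the chains in the
interval below `x`, whose number is odd by induction. -/
lemma odd_ncard_orderComplex_add_ncard {Z : Set α} (hZ : ∀ x ∈ Z, ∀ y ∈ Z, x \ y ∈ Z) {W : Set α}
    (hWZ : W ⊆ Z \ {⊥}) (hW : ∀ x ∈ W, ∀ y ∈ Z \ {⊥}, y ≤ x → y ∈ W) :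
    Odd ((orderComplex W).ncard + W.ncard) := by
  induction hn : W.ncard using Nat.strong_induction_on generalizing W with
  | _ n ih =>
    subst hn
    obtain rfl | hne := W.eq_empty_or_nonempty
    · have hempty : orderComplex (∅ : Set α) = {∅} := by
        ext A
        simpa [orderComplex] using fun hA : A = ∅ => by simp [hA]
      simp [hempty]
    obtain ⟨x, hxW, hmax⟩ := W.toFinite.exists_maximal hne
    have hnlt : ∀ y ∈ W, ¬ x < y := fun y hy hxy => hxy.not_ge (hmax hy hxy.le)
    have hbelow : {y | y ∈ W ∧ (y < x ∨ x < y)} = Z ∩ Set.Ioo ⊥ x := by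
      ext y
      refine ⟨fun hy => ⟨(hWZ hy.1).1, bot_lt_iff_ne_bot.2 (hWZ hy.1).2,
        hy.2.resolve_right (hnlt y hy.1)⟩, fun hy => ⟨?_, Or.inl hy.2.2⟩⟩
      exact hW x hxW y ⟨hy.1, hy.2.1.ne'⟩ hy.2.2.le
    have hdel : Odd ((orderComplex (W \ {x})).ncard + (W \ {x}).ncard) := by
      refine ih _ (Set.ncard_sdiff_singleton_lt_of_mem hxW) (Set.sdiff_subset.trans hWZ)
        (fun z hz y hy hyz => ⟨hW z hz.1 y hy hyz, fun hyx => ?_⟩) rfl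
      exact hnlt z hz.1 ((hyx ▸ hyz : x ≤ z).lt_of_ne' hz.2)
    have hlink : Odd ((orderComplex (Z ∩ Set.Ioo ⊥ x)).ncard + (Z ∩ Set.Ioo ⊥ x).ncard) := by
      refine ih _ (Set.ncard_lt_ncard ⟨?_, fun h => (h hxW).2.2.false⟩)
        (fun y hy => ⟨hy.1, hy.2.1.ne'⟩)
        (fun z hz y hy hyz => ⟨hy.1, bot_lt_iff_ne_bot.2 hy.2, hyz.trans_lt hz.2.2⟩) rfl
      exact fun y hy => hW x hxW y ⟨hy.1, hy.2.1.ne'⟩ hy.2.2.le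
    have heven := even_ncard_Ioo_bot hZ (hWZ hxW).1
    rw [ncard_orderComplex_eq_add hxW, hbelow, ← Set.ncard_sdiff_singleton_add_one hxW]
    grind

lemma even_ncard_of_even_ncard_orderComplex {Z : Set α} (hbot : ⊥ ∈ Z)
    (hZ : ∀ x ∈ Z, ∀ y ∈ Z, x \ y ∈ Z) (heven : Even (orderComplex (Z \ {⊥})).ncard) :
    Even Z.ncard := by
  have hodd := odd_ncard_orderComplex_add_ncard hZ subset_rfl fun _ _ y hy _ => hy
  rw [← Set.ncard_sdiff_singleton_add_one hbot]
  grind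

end GeneralizedBooleanAlgebra

/-- Smith's theorem for the commuting involutions in `P`, followed by the Lefschetz count for `g`
on the fixed points of `P`. -/
theorem even_ncard_fixed_of_acyclicComplex {α : Type*} [BooleanAlgebra α]
    [Fintype α] [DecidableEq α] {Y : Set α} (hY : IsLowerSet Y)
    (hbot : ⊥ ∈ Y) (hacyclic : AcyclicComplex (orderComplex (Y \ {⊥}))) (P : Finset (α ≃o α))
    (hP : ∀ σ ∈ P, Function.Involutive σ) (hcomm : ∀ σ ∈ P, ∀ τ ∈ P, Function.Commute σ τ)
    (hPY : ∀ σ ∈ P, ∀ x, σ x ∈ Y ↔ x ∈ Y) (g : α ≃o α) (hgY : ∀ x, g x ∈ Y ↔ x ∈ Y)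
    (hgP : ∀ x, (∀ σ ∈ P, σ (g x) = g x) ↔ ∀ σ ∈ P, σ x = x) :
    Even {x | x ∈ Y ∧ (∀ σ ∈ P, σ x = x) ∧ g x = x}.ncard := by
  have hsdiff : ∀ (e : α ≃o α) (x y : α), e (x \ y) = e x \ e y := fun e => map_sdiff' e
  have hne : ∀ e : α ≃o α, ∀ x, e x = ⊥ ↔ x = ⊥ := fun e x => by simp
  refine even_ncard_of_even_ncard_orderComplex ⟨hbot, fun σ _ => map_bot σ, map_bot g⟩ ?_ ?_
  · rintro x ⟨hxY, hxP, hxg⟩ y ⟨-, hyP, hyg⟩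
    exact ⟨hY sdiff_le hxY, fun σ hσ => by rw [hsdiff, hxP σ hσ, hyP σ hσ],
      by rw [hsdiff, hxg, hyg]⟩
  · have hfix := hacyclic.orderComplex_forall_fixed P hP hcomm fun σ hσ x => by
      simp [hPY σ hσ x, hne]
    convert even_ncard_orderComplex_fixed hfix g fun x => ?_ using 3
    · ext x
      simp only [Set.mem_sdiff, Set.mem_ofPred_eq]
      tauto
    · exact and_congr (by simp [hgY x]) (hgP x)

end ChainParity

section DecisionTrees

variable {ι : Type}

section Ioc

variable [DecidableEq ι] {B C : Finset ι} {i : ι}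

lemma Ioc_sdiff_singleton_insert (hiB : i ∉ B) :
    Set.Ioc B C \ {insert i B} = Set.Ioc B (C.erase i) ∪ Set.Ioc (insert i B) C := by
  ext A
  refine ⟨fun ⟨⟨hBA, hAC⟩, hne⟩ => ?_, ?_⟩
  · by_cases hiA : i ∈ A
    · exact Or.inr ⟨lt_of_le_of_ne (Finset.insert_subset hiA hBA.le) (Ne.symm hne), hAC⟩
    · exact Or.inl ⟨hBA, Finset.subset_erase.2 ⟨hAC, hiA⟩⟩
  · rintro (⟨hBA, hAC⟩ | ⟨hBA, hAC⟩)
    · refine ⟨⟨hBA, hAC.trans (Finset.erase_subset i C)⟩, ?_⟩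
      rintro rfl
      exact Finset.notMem_erase i C (hAC (Finset.mem_insert_self i B))
    · exact ⟨⟨(Finset.ssubset_insert hiB).trans hBA, hAC⟩, hBA.ne'⟩

lemma mem_Ioc_and_comparable_insert_iff (hiB : i ∉ B) {A : Finset ι} :
    A ∈ Set.Ioc B C ∧ (A < insert i B ∨ insert i B < A) ↔ A ∈ Set.Ioc (insert i B) C := by
  constructor
  · rintro ⟨⟨hBA, hAC⟩, hA⟩
    exact ⟨hA.resolve_left ((Finset.covBy_insert hiB).2 hBA), hAC⟩
  · rintro ⟨hBA, hAC⟩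
    exact ⟨⟨(Finset.ssubset_insert hiB).trans hBA, hAC⟩, Or.inr hBA⟩

variable [Fintype ι] {Y : Set (Finset ι)}

/-- A set `A` containing `i` is coned off by its subset `A.erase i`. -/
lemma acyclicComplex_orderComplex_Ioc_union (hY : IsLowerSet Y) (hiB : i ∉ B)
    (hdel : AcyclicComplex (orderComplex (Y ∩ Set.Ioc B (C.erase i)))) :
    AcyclicComplex (orderComplex (Y ∩ (Set.Ioc B (C.erase i) ∪ Set.Ioc (insert i B) C))) := by
  classical
  rw [Set.inter_union_distrib_left, ← Set.coe_toFinset (Y ∩ Set.Ioc (insert i B) C)]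
  refine acyclicComplex_orderComplex_union hdel _ ?_ ?_ <;>
    simp only [Set.mem_toFinset] <;> rintro A ⟨hAY, hBA, hAC⟩
  · exact fun hA => Finset.notMem_erase i C (hA.2.2 (hBA.le (Finset.mem_insert_self i B)))
  · have hiA : i ∈ A := hBA.le (Finset.mem_insert_self i B)
    have herase : A.erase i < A := Finset.erase_ssubset hiA
    have hBerase : B < A.erase i := by
      refine lt_of_le_of_ne (Finset.subset_erase.2 ⟨fun x hx => ?_, hiB⟩) fun h => ?_
      · exact hBA.le (Finset.mem_insert_of_mem hx)
      · exact hBA.ne (by rw [h, Finset.insert_erase hiA])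
    refine acyclicComplex_orderComplex_of_comparable (y := A.erase i)
      (Or.inl ⟨⟨hY herase.le hAY, hBerase, Finset.erase_subset_erase i hAC⟩, Or.inl herase⟩) ?_
    rintro D (⟨⟨-, -, hDC⟩, hDA | hAD⟩ | ⟨-, hAD⟩)
    · exact Or.inl (Finset.subset_erase.2 ⟨hDA.le, fun h => Finset.notMem_erase i C (hDC h)⟩)
    · exact absurd (hDC (hAD.le hiA)) (Finset.notMem_erase i C)
    · exact Or.inr (herase.trans hAD).le

lemma acyclicComplex_orderComplex_Ioc (hY : IsLowerSet Y) (hiB : i ∉ B) (hiC : insert i B ⊆ C)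
    (hdel : AcyclicComplex (orderComplex (Y ∩ Set.Ioc B (C.erase i))))
    (hlink : insert i B ∈ Y → AcyclicComplex (orderComplex (Y ∩ Set.Ioc (insert i B) C))) :
    AcyclicComplex (orderComplex (Y ∩ Set.Ioc B C)) := by
  have hunion := acyclicComplex_orderComplex_Ioc_union (C := C) hY hiB hdel
  rw [← Ioc_sdiff_singleton_insert hiB, ← Set.inter_sdiff_assoc] at hunion
  by_cases hx : insert i B ∈ Y
  · refine acyclicComplex_orderComplex_of_sdiff_singleton
      ⟨hx, Finset.ssubset_insert hiB, hiC⟩ hunion ?_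
    simpa only [Set.mem_inter_iff, and_assoc, mem_Ioc_and_comparable_insert_iff hiB,
      ← Set.inter_def] using hlink hx
  · rwa [Set.sdiff_singleton_eq_self fun h => hx h.1] at hunion

end Ioc

theorem DecisionTree.acyclicComplex_of_depth_add_card_lt [Fintype ι] [DecidableEq ι]
    {Y : Set (Finset ι)} (hY : IsLowerSet Y) (T : DecisionTree ι) {B C : Finset ι} (hBC : B ⊆ C)
    (hB : B ∈ Y)
    (hT : ∀ A, B ⊆ A → A ⊆ C → (T.eval (fun i => decide (i ∈ A)) = true ↔ A ∈ Y))
    (hdepth : T.depth + B.card < C.card) :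
    AcyclicComplex (orderComplex (Y ∩ Set.Ioc B C)) := by
  induction T generalizing B C with
  | leaf b =>
    have hC : C ∈ Y := (hT C hBC subset_rfl).1 ((hT B subset_rfl hBC).2 hB)
    have hlt : B < C := hBC.lt_of_ne fun h => by simp [h] at hdepth
    exact acyclicComplex_orderComplex_of_comparable ⟨hC, hlt, le_rfl⟩ fun A hA => Or.inl hA.2.2
  | node i T₁ T₀ ih₁ ih₀ =>
    simp only [DecisionTree.eval, DecisionTree.depth] at hT hdepth
    have hd₁ := le_max_left T₁.depth T₀.depth
    have hd₀ := le_max_right T₁.depth T₀.depth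
    by_cases hiB : i ∈ B
    · exact ih₁ hBC hB (fun A hBA hAC => by simpa [hBA hiB] using hT A hBA hAC) (by lia)
    by_cases hiC : i ∈ C
    · have hcard := Finset.card_erase_add_one hiC
      have hcard' := Finset.card_insert_of_notMem hiB
      refine acyclicComplex_orderComplex_Ioc hY hiB (Finset.insert_subset hiC hBC)
        (ih₀ (Finset.subset_erase.2 ⟨hBC, hiB⟩) hB (fun A hBA hAC => ?_) (by lia))
        fun hx => ih₁ (Finset.insert_subset hiC hBC) hx (fun A hBA hAC => ?_) (by lia)
      · have hiA : i ∉ A := fun h => Finset.notMem_erase i C (hAC h)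
        simpa [hiA] using hT A hBA (hAC.trans (Finset.erase_subset i C))
      · simpa [hBA (Finset.mem_insert_self i B)] using
          hT A ((Finset.subset_insert i B).trans hBA) hAC
    · exact ih₀ hBC hB (fun A hBA hAC => by
        simpa [show i ∉ A from fun h => hiC (hAC h)] using hT A hBA hAC) (by lia)

lemma DecisionTree.exists_eval_eq (s : Finset ι) (f : (ι → Bool) → Bool)
    (hf : ∀ x y, (∀ i ∈ s, x i = y i) → f x = f y) :
    ∃ T : DecisionTree ι, (∀ x, T.eval x = f x) ∧ T.depth ≤ s.card := by
  classical
  induction s using Finset.induction_on generalizing f with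
  | empty => exact ⟨.leaf (f fun _ => true), fun x => hf _ _ (by simp), le_rfl⟩
  | insert a s ha ih =>
    have hbranch (b : Bool) : ∃ T : DecisionTree ι,
        (∀ x, T.eval x = f (Function.update x a b)) ∧ T.depth ≤ s.card :=
      ih (fun x => f (Function.update x a b)) fun x y hxy => hf _ _ fun i hi => by
        by_cases hia : i = a
        · subst hia
          simp
        · simp [hia, hxy i ((Finset.mem_insert.1 hi).resolve_left hia)]
    obtain ⟨T₁, hT₁, hd₁⟩ := hbranch true
    obtain ⟨T₀, hT₀, hd₀⟩ := hbranch false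
    refine ⟨.node a T₁ T₀, fun x => ?_, ?_⟩
    · have hupdate : Function.update x a (x a) = x := Function.update_eq_self a x
      cases hxa : x a <;> rw [hxa] at hupdate <;> simp [DecisionTree.eval, hxa, hT₀, hT₁, hupdate]
    · rw [Finset.card_insert_of_notMem ha]
      exact Nat.succ_le_succ (max_le hd₁ hd₀)

end DecisionTrees

section GraphProperties

variable {n : ℕ}

instance : Fintype (EdgeVar n) :=
  inferInstanceAs (Fintype {p : Fin n × Fin n // p.1 < p.2})

instance : DecidableEq (EdgeVar n) :=
  inferInstanceAs (DecidableEq {p : Fin n × Fin n // p.1 < p.2})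

lemma card_edgeVar : Fintype.card (EdgeVar n) = n * (n - 1) / 2 := by
  have hsum : Fintype.card (EdgeVar n) = ∑ j : Fin n, (j : ℕ) := by
    change Fintype.card {p : Fin n × Fin n // p.1 < p.2} = _
    rw [Fintype.card_subtype, Finset.card_filter, Fintype.sum_prod_type_right]
    refine Finset.sum_congr rfl fun j _ => ?_
    rw [← Finset.card_filter, ← Fin.card_Iio j]
    congr 1
    ext i
    simp
  rw [hsum, Fin.sum_univ_eq_sum_range (fun i => i), Finset.sum_range_id]

/-- The adjacency variable of the pair `i < j`. -/
def EdgeVar.mk {i j : Fin n} (h : i < j) : EdgeVar n := ⟨(i, j), h⟩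

lemma graphOfInput_adj_iff (x : EdgeVar n → Bool) {i j : Fin n} (h : i < j) :
    (graphOfInput x).Adj i j ↔ x (EdgeVar.mk h) = true := by
  simp [graphOfInput, SimpleGraph.fromRel_adj, EdgeVar.mk, h, h.ne, h.le]

lemma graph_le_iff_of_lt {G G' : SimpleGraph (Fin n)} :
    G ≤ G' ↔ ∀ i j, i < j → G.Adj i j → G'.Adj i j := by
  refine ⟨fun h i j _ hij => h hij, fun h i j hij => ?_⟩
  rcases lt_trichotomy i j with hlt | rfl | hlt
  · exact h i j hlt hij
  · exact absurd hij (G.loopless.irrefl i)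
  · exact (h j i hlt hij.symm).symm

/-- A set of adjacency variables, viewed as the edge set of a graph on `Fin n`. -/
noncomputable def graphOrderIso (n : ℕ) : Finset (EdgeVar n) ≃o SimpleGraph (Fin n) where
  toFun A := graphOfInput fun i => decide (i ∈ A)
  invFun G := (Set.toFinite {i : EdgeVar n | G.Adj i.1.1 i.1.2}).toFinset
  left_inv A := by
    ext i
    rw [Set.Finite.mem_toFinset, Set.mem_ofPred_eq, graphOfInput_adj_iff _ i.2]
    exact decide_eq_true_iff
  right_inv G := by
    apply le_antisymm <;> rw [graph_le_iff_of_lt] <;> intro i j hij <;>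
      rw [graphOfInput_adj_iff _ hij, decide_eq_true_iff, Set.Finite.mem_toFinset] <;> exact id
  map_rel_iff' {A B} := by
    rw [Equiv.coe_fn_mk, graph_le_iff_of_lt]
    have hiff {i j : Fin n} (hij : i < j) :
        ((graphOfInput fun i => decide (i ∈ A)).Adj i j →
          (graphOfInput fun i => decide (i ∈ B)).Adj i j) ↔
          (EdgeVar.mk hij ∈ A → EdgeVar.mk hij ∈ B) := by
      simp only [graphOfInput_adj_iff _ hij, decide_eq_true_iff]
    exact ⟨fun h i => (hiff i.2).1 (h _ _ i.2), fun h i j hij => (hiff hij).2 (@h _)⟩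

theorem evasive_of_not_acyclicComplex [Fintype (SimpleGraph (Fin n))]
    [DecidableEq (SimpleGraph (Fin n))] {P : Set (SimpleGraph (Fin n))} (hP : IsLowerSet P)
    (hbot : ⊥ ∈ P) (hcyc : ¬ AcyclicComplex (orderComplex (P \ {⊥}))) : Evasive P := by
  classical
  obtain ⟨T, hT, hd⟩ := DecisionTree.exists_eval_eq (Finset.univ : Finset (EdgeVar n))
    (fun x => decide (graphOfInput x ∈ P))
    (fun x y hxy => by rw [funext fun i => hxy i (Finset.mem_univ i)])
  have hmem : Fintype.card (EdgeVar n) ∈ {d | ∃ T : DecisionTree (EdgeVar n),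
      (∀ x, T.eval x = true ↔ graphOfInput x ∈ P) ∧ T.depth ≤ d} :=
    ⟨T, fun x => by rw [hT, decide_eq_true_iff], hd⟩
  rw [Evasive, queryComplexity, ← card_edgeVar]
  refine le_antisymm (Nat.sInf_le hmem) (le_csInf ⟨_, hmem⟩ ?_)
  rintro d ⟨T, hT, hd⟩
  by_contra! hlt
  have hac := DecisionTree.acyclicComplex_of_depth_add_card_lt
    (Y := graphOrderIso n ⁻¹' P) (hP.preimage (graphOrderIso n).monotone) T
    (Finset.empty_subset Finset.univ) (by simpa [← Finset.bot_eq_empty] using hbot)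
    (fun A _ _ => hT _) (by simpa using hd.trans_lt hlt)
  refine hcyc (.of_orderIso (graphOrderIso n) ?_)
  convert hac using 2
  ext A
  simp [← Finset.bot_eq_empty]

end GraphProperties

section ContainsCopy

variable {V W W' : Type} {H : SimpleGraph V}

/-- Pulling graphs back along a bijection of the vertices. -/
def comapOrderIso {W W' : Type*} (e : W ≃ W') : SimpleGraph W' ≃o SimpleGraph W where
  toFun G := G.comap e
  invFun G := G.comap e.symm
  left_inv G := by ext; simp
  right_inv G := by ext; simp
  map_rel_iff' {G G'} :=
    ⟨fun h x y hxy => by simpa using @h (e.symm x) (e.symm y) (by simpa using hxy),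
      fun h _ _ hxy => h hxy⟩

lemma comapOrderIso_adj {W W' : Type*} (e : W ≃ W') (G : SimpleGraph W') (x y : W) :
    (comapOrderIso e G).Adj x y ↔ G.Adj (e x) (e y) := Iff.rfl

lemma containsCopy_comapOrderIso_iff (e : W ≃ W') (G : SimpleGraph W') :
    ContainsCopy H (comapOrderIso e G) ↔ ContainsCopy H G :=
  ⟨fun ⟨f, hf, h⟩ => ⟨e ∘ f, e.injective.comp hf, h⟩,
    fun ⟨f, hf, h⟩ => ⟨e.symm ∘ f, e.symm.injective.comp hf, fun v w hvw => by
      simpa [comapOrderIso_adj] using h v w hvw⟩⟩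

lemma isLowerSet_not_containsCopy : IsLowerSet {G : SimpleGraph W | ¬ ContainsCopy H G} :=
  fun _ _ hle hG ⟨f, hf, h⟩ => hG ⟨f, hf, fun v w hvw => hle (h v w hvw)⟩

lemma not_containsCopy_bot (hH : H.edgeSet.Nonempty) :
    ¬ ContainsCopy H (⊥ : SimpleGraph W) := by
  rintro ⟨f, -, h⟩
  obtain ⟨v, w, hvw⟩ := SimpleGraph.ne_bot_iff_exists_adj.1 (SimpleGraph.edgeSet_nonempty.1 hH)
  exact h v w hvw

theorem evasive_forbiddenSubgraphProperty_of_not_acyclicComplex {n : ℕ}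
    [Fintype (SimpleGraph W)] [DecidableEq (SimpleGraph W)] (e : Fin n ≃ W)
    (hH : H.edgeSet.Nonempty)
    (hcyc : ¬ AcyclicComplex (orderComplex ({G : SimpleGraph W | ¬ ContainsCopy H G} \ {⊥}))) :
    Evasive (ForbiddenSubgraphProperty H n) := by
  classical
  refine evasive_of_not_acyclicComplex isLowerSet_not_containsCopy (not_containsCopy_bot hH)
    fun hac => hcyc (.of_orderIso (comapOrderIso e.symm) ?_)
  convert hac using 2
  ext G
  simp [containsCopy_comapOrderIso_iff, ForbiddenSubgraphProperty]

end ContainsCopy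

section BlowUp

lemma ncard_modEq_ncard_fixed {α : Type*} [Finite α] {p : ℕ} [Fact p.Prime] {s : Set α}
    {f : α → α} (hfs : Set.MapsTo f s s) {k : ℕ} (hf : ∀ x ∈ s, f^[p ^ k] x = x) :
    s.ncard ≡ {x | x ∈ s ∧ f x = x}.ncard [MOD p] := by
  classical
  have := Fintype.ofFinite s
  let σ : Function.End s := hfs.restrict f s s
  have hσ : σ ^ p ^ k = 1 := by
    funext x
    rw [hom_coe_pow (fun f : Function.End s => (f : s → s)) rfl (fun _ _ => rfl)]
    change (hfs.restrict f s s)^[p ^ k] x = x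
    rw [hfs.iterate_restrict]
    exact Subtype.ext (hf x x.2)
  have h := Equiv.Perm.card_fixedPoints_modEq hσ
  rw [← Nat.card_eq_fintype_card, ← Nat.card_eq_fintype_card, Nat.card_coe_set_eq,
    Nat.card_coe_set_eq] at h
  convert h using 1
  rw [← Set.ncard_image_of_injective _ Subtype.val_injective]
  congr 1
  ext x
  simp [σ, Function.IsFixedPt, Subtype.ext_iff, and_comm]

variable {V I J : Type*} {H : SimpleGraph V}

/-- The graph obtained from `G` by replacing each vertex `i` by a clique on `w i` vertices, two
such cliques being completely joined whenever their vertices are adjacent in `G`. -/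
def cliqueBlowUp (w : I → ℕ) (G : SimpleGraph I) : SimpleGraph (Σ i, Fin (w i)) where
  Adj x y := G.Adj x.1 y.1 ∨ x.1 = y.1 ∧ (x.2 : ℕ) ≠ y.2
  symm := ⟨fun _ _ h => h.imp .symm (And.imp Eq.symm Ne.symm)⟩
  loopless := ⟨fun _ h => h.elim (G.loopless.irrefl _) fun h => h.2 rfl⟩

/-- The parity of the number of graphs on `I` whose blow-up with clique sizes `w` receives no
homomorphism from `H`. -/
noncomputable def blowUpFreeParity (H : SimpleGraph V) (w : I → ℕ) : ZMod 2 :=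
  ({G : SimpleGraph I | IsEmpty (H →g cliqueBlowUp w G)}.ncard : ZMod 2)

/-- Relabelling the vertices of a graph relabels the cliques of its blow-up. -/
def cliqueBlowUpComapIso (e : I ≃ J) (w : J → ℕ) (G : SimpleGraph J) :
    cliqueBlowUp (w ∘ e) (comapOrderIso e G) ≃g cliqueBlowUp w G where
  toEquiv := Equiv.sigmaCongrLeft (β := fun j => Fin (w j)) e
  map_rel_iff' {x y} := by
    simp [cliqueBlowUp, comapOrderIso_adj, Equiv.sigmaCongrLeft]

lemma isEmpty_hom_congr {W W' : Type*} {G : SimpleGraph W} {G' : SimpleGraph W'}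
    (h : Nonempty (G →g G')) (h' : Nonempty (G' →g G)) :
    IsEmpty (H →g G) ↔ IsEmpty (H →g G') := by
  obtain ⟨f⟩ := h
  obtain ⟨f'⟩ := h'
  exact ⟨fun h => ⟨fun φ => h.elim (f'.comp φ)⟩, fun h => ⟨fun φ => h.elim (f.comp φ)⟩⟩

lemma blowUpFreeParity_comp_equiv (e : I ≃ J) (w : J → ℕ) :
    blowUpFreeParity H (w ∘ e) = blowUpFreeParity H w := by
  unfold blowUpFreeParity
  rw [← Set.ncard_preimage_of_injective_subset_range (comapOrderIso e).injective
    (by simp [(comapOrderIso e).surjective.range_eq])]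
  congr 2
  ext G
  let φ := cliqueBlowUpComapIso e w G
  exact isEmpty_hom_congr ⟨φ.toHom⟩ ⟨φ.symm.toHom⟩

section Twins

/-- Duplicate the vertex `none`; the two copies `none` and `some none` are adjacent iff `b`. -/
def twinGraph (b : Prop) (G : SimpleGraph (Option J)) : SimpleGraph (Option (Option J)) where
  Adj p r := G.Adj p.join r.join ∨ b ∧ p ≠ r ∧ p.join = r.join
  symm := ⟨fun _ _ h => h.imp .symm fun h => ⟨h.1, h.2.1.symm, h.2.2.symm⟩⟩
  loopless := ⟨fun _ h => h.elim (G.loopless.irrefl _) fun h => h.2.1 rfl⟩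

lemma comap_twinGraph (b : Prop) (G : SimpleGraph (Option J)) :
    (twinGraph b G).comap (Option.map some) = G := by
  ext x y
  rcases x with _ | x <;> rcases y with _ | y <;> simp [twinGraph]

lemma twinGraph_injective (b : Prop) : Function.Injective (twinGraph (J := J) b) :=
  Function.LeftInverse.injective (comap_twinGraph b)

lemma join_swap_none [DecidableEq J] (p : Option (Option J)) :
    (Equiv.swap none (some none) p).join = p.join := by
  rw [Equiv.swap_apply_def]
  split_ifs <;> simp_all

lemma range_twinGraph [DecidableEq J] (b : Prop) :
    Set.range (twinGraph (J := J) b) =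
      {G | comapOrderIso (Equiv.swap none (some none)) G = G ∧ (G.Adj none (some none) ↔ b)} := by
  ext G
  constructor
  · rintro ⟨G, rfl⟩
    refine ⟨?_, by simp [twinGraph]⟩
    ext p r
    simp [comapOrderIso_adj, twinGraph, join_swap_none]
  · rintro ⟨hswap, hb⟩
    have hadj (p r) : G.Adj (Equiv.swap none (some none) p) (Equiv.swap none (some none) r) ↔
        G.Adj p r := by rw [← comapOrderIso_adj, hswap]
    refine ⟨G.comap (Option.map some), ?_⟩
    ext p r
    have h₁ := hadj none r
    have h₂ := hadj p none
    rcases p with _ | _ | j <;> rcases r with _ | _ | k <;>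
      simp_all [twinGraph, Equiv.swap_apply_of_ne_of_ne, G.adj_comm]

lemma sigma_fin_eq_iff {w : I → ℕ} {x y : Σ i, Fin (w i)} :
    x = y ↔ x.1 = y.1 ∧ (x.2 : ℕ) = y.2 := by
  refine ⟨by rintro rfl; simp, fun ⟨h₁, h₂⟩ => ?_⟩
  obtain ⟨i, x⟩ := x
  obtain rfl : i = y.1 := h₁
  exact congrArg (Sigma.mk y.1) (Fin.ext h₂)

variable (a : ℕ) (u : J → ℕ)

/-- Two adjacent twin cliques on `a` vertices form one clique on `a + a` vertices. -/
def mergeTwinCliques : (Σ p, Fin (Option.elim' a (Option.elim' a u) p)) →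
    Σ p, Fin (Option.elim' (a + a) u p)
  | ⟨none, x⟩ => ⟨none, x, x.2.trans_le (Nat.le_add_right a a)⟩
  | ⟨some none, x⟩ => ⟨none, a + x, Nat.add_lt_add_left x.2 a⟩
  | ⟨some (some j), x⟩ => ⟨some j, x⟩

lemma mergeTwinCliques_fst (x : Σ p, Fin (Option.elim' a (Option.elim' a u) p)) :
    (mergeTwinCliques a u x).1 = x.1.join := by
  rcases x with ⟨_ | _ | j, x⟩ <;> rfl

lemma mergeTwinCliques_bijective : Function.Bijective (mergeTwinCliques a u) := by
  constructor
  · rintro ⟨_ | _ | j, x⟩ ⟨_ | _ | k, y⟩ <;> rw [sigma_fin_eq_iff, sigma_fin_eq_iff] <;>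
      simp [mergeTwinCliques] <;> lia
  · rintro ⟨_ | j, x⟩
    · by_cases hx : (x : ℕ) < a
      · exact ⟨⟨none, x, hx⟩, rfl⟩
      · have hxa : (x : ℕ) < a + a := x.2
        exact ⟨⟨some none, x - a, (by lia : (x : ℕ) - a < a)⟩, sigma_fin_eq_iff.2
          ⟨rfl, Nat.add_sub_cancel' (not_lt.1 hx)⟩⟩
    · exact ⟨⟨some (some j), x⟩, rfl⟩

lemma isEmpty_hom_cliqueBlowUp_twinGraph_true (G : SimpleGraph (Option J)) :
    IsEmpty (H →g cliqueBlowUp (Option.elim' a (Option.elim' a u)) (twinGraph True G)) ↔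
      IsEmpty (H →g cliqueBlowUp (Option.elim' (a + a) u) G) := by
  let φ : cliqueBlowUp (Option.elim' a (Option.elim' a u)) (twinGraph True G) ≃g
      cliqueBlowUp (Option.elim' (a + a) u) G :=
    { toEquiv := Equiv.ofBijective _ (mergeTwinCliques_bijective a u)
      map_rel_iff' {x y} := by
        have h := (mergeTwinCliques_bijective a u).injective.ne_iff (x := x) (y := y)
        simp only [cliqueBlowUp, twinGraph, Equiv.ofBijective_apply, mergeTwinCliques_fst, ne_eq,
          sigma_fin_eq_iff] at h ⊢
        grind }
  exact isEmpty_hom_congr ⟨φ.toHom⟩ ⟨φ.symm.toHom⟩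

lemma isEmpty_hom_cliqueBlowUp_twinGraph_false (G : SimpleGraph (Option J)) :
    IsEmpty (H →g cliqueBlowUp (Option.elim' a (Option.elim' a u)) (twinGraph False G)) ↔
      IsEmpty (H →g cliqueBlowUp (Option.elim' a u) G) := by
  refine isEmpty_hom_congr ⟨?_⟩ ⟨?_⟩
  · refine ⟨fun
      | ⟨none, x⟩ => ⟨none, x⟩
      | ⟨some none, x⟩ => ⟨none, x⟩
      | ⟨some (some j), x⟩ => ⟨some j, x⟩, ?_⟩
    rintro ⟨_ | _ | j, x⟩ ⟨_ | _ | k, y⟩ h <;> simp_all [cliqueBlowUp, twinGraph]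
  · refine ⟨fun
      | ⟨none, x⟩ => ⟨none, x⟩
      | ⟨some j, x⟩ => ⟨some (some j), x⟩, ?_⟩
    rintro ⟨_ | j, x⟩ ⟨_ | k, y⟩ h <;> simp_all [cliqueBlowUp, twinGraph]

lemma ncard_fixed_adj_iff [DecidableEq J] (S : Set (SimpleGraph (Option (Option J)))) (b : Prop) :
    {G | (G ∈ S ∧ comapOrderIso (Equiv.swap none (some none)) G = G) ∧
      (G.Adj none (some none) ↔ b)}.ncard = (twinGraph b ⁻¹' S).ncard := by
  rw [← Set.ncard_image_of_injective (twinGraph b ⁻¹' S) (twinGraph_injective b),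
    Set.image_preimage_eq_inter_range,
    range_twinGraph]
  simp only [Set.inter_def, and_assoc, Set.mem_ofPred_eq]

lemma blowUpFreeParity_twin [Finite J] :
    blowUpFreeParity H (Option.elim' a (Option.elim' a u)) =
      blowUpFreeParity H (Option.elim' a u) + blowUpFreeParity H (Option.elim' (a + a) u) := by
  classical
  let S := {G | IsEmpty (H →g cliqueBlowUp (Option.elim' a (Option.elim' a u)) G)}
  let σ : Option (Option J) ≃ Option (Option J) := Equiv.swap none (some none)
  have hw : Option.elim' a (Option.elim' a u) ∘ σ = Option.elim' a (Option.elim' a u) := by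
    funext p
    simp only [σ, Function.comp_apply, Equiv.swap_apply_def]
    split_ifs <;> simp_all
  have hmaps : Set.MapsTo (comapOrderIso σ) S S := fun G hG => by
    let φ := cliqueBlowUpComapIso σ (Option.elim' a (Option.elim' a u)) G
    rw [hw] at φ
    exact (isEmpty_hom_congr ⟨φ.toHom⟩ ⟨φ.symm.toHom⟩).2 hG
  have hinv : ∀ G ∈ S, (comapOrderIso σ)^[2 ^ 1] G = G := fun G _ => by
    ext p r
    simp [comapOrderIso_adj, σ]
  have hfixed := (ZMod.natCast_eq_natCast_iff _ _ _).2 (ncard_modEq_ncard_fixed hmaps hinv)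
  rw [blowUpFreeParity, hfixed,
    ← Set.ncard_inter_add_ncard_sdiff_eq_ncard _ {G | G.Adj none (some none)}, Nat.cast_add,
    add_comm]
  congr 2
  · convert ncard_fixed_adj_iff S False using 2 <;> ext G <;>
      simp [σ, S, isEmpty_hom_cliqueBlowUp_twinGraph_false]
  · convert ncard_fixed_adj_iff S True using 2 <;> ext G <;>
      simp [σ, S, isEmpty_hom_cliqueBlowUp_twinGraph_true]

end Twins

end BlowUp

section WeightAlgebra

/-- Functions on multisets of weights that satisfy the twin relation and vanish on multisets
having a weight at least `h`. -/
def twinSubmodule (h : ℕ) : Submodule (ZMod 2) (Multiset ℕ → ZMod 2) where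
  carrier := {f | (∀ a m, f (a ::ₘ a ::ₘ m) = f (a ::ₘ m) + f ((a + a) ::ₘ m)) ∧
    ∀ a m, h ≤ a → f (a ::ₘ m) = 0}
  add_mem' := by
    rintro f g ⟨hf, hf'⟩ ⟨hg, hg'⟩
    refine ⟨fun a m => ?_, fun a m ha => ?_⟩
    · simp only [Pi.add_apply, hf, hg, add_add_add_comm]
    · simp [hf' a m ha, hg' a m ha]
  zero_mem' := by simp
  smul_mem' := by
    rintro c f ⟨hf, hf'⟩
    refine ⟨fun a m => ?_, fun a m ha => ?_⟩
    · simp only [Pi.smul_apply, hf, smul_add]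
    · simp [hf' a m ha]

/-- Adjoining an element of weight `a`, as an operator on `twinSubmodule h`. -/
def consOperator (h a : ℕ) : Module.End (ZMod 2) (twinSubmodule h) where
  toFun f :=
    ⟨fun m => f.1 (a ::ₘ m),
      fun b m => by
        simp only [Multiset.cons_swap a b, Multiset.cons_swap a (b + b)]
        exact f.2.1 b (a ::ₘ m),
      fun b m hb => by
        simp only [Multiset.cons_swap a b]
        exact f.2.2 b (a ::ₘ m) hb⟩
  map_add' _ _ := rfl
  map_smul' _ _ := rfl

lemma consOperator_apply (h a : ℕ) (f : twinSubmodule h) (m : Multiset ℕ) :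
    (consOperator h a f).1 m = f.1 (a ::ₘ m) := rfl

lemma consOperator_pow_apply (h a n : ℕ) (f : twinSubmodule h) (m : Multiset ℕ) :
    ((consOperator h a ^ n) f).1 m = f.1 (Multiset.replicate n a + m) := by
  induction n generalizing m with
  | zero => simp
  | succ n ih =>
    rw [pow_succ', Module.End.mul_apply, consOperator_apply, ih, Multiset.replicate_succ,
      Multiset.cons_add, ← Multiset.add_cons]

lemma commute_consOperator (h a b : ℕ) : Commute (consOperator h a) (consOperator h b) := by
  refine LinearMap.ext fun f => Subtype.ext (funext fun m => ?_)
  simp only [Module.End.mul_apply, consOperator_apply]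
  rw [Multiset.cons_swap]

lemma consOperator_sq (h a : ℕ) :
    consOperator h a ^ 2 = consOperator h a + consOperator h (a + a) := by
  refine LinearMap.ext fun f => Subtype.ext (funext fun m => ?_)
  rw [sq]
  exact f.2.1 a m

lemma consOperator_eq_zero {h a : ℕ} (ha : h ≤ a) : consOperator h a = 0 :=
  LinearMap.ext fun f => Subtype.ext (funext fun m => f.2.2 a m ha)

lemma consOperator_pow_two_pow_two_pow (h a t : ℕ) :
    consOperator h a ^ 2 ^ 2 ^ t = consOperator h a + consOperator h (2 ^ 2 ^ t * a) := by
  induction t generalizing a with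
  | zero => simpa [two_mul] using consOperator_sq h a
  | succ t ih =>
    have hfrob (b c : ℕ) : (consOperator h b + consOperator h c) ^ 2 ^ 2 ^ t =
        consOperator h b ^ 2 ^ 2 ^ t + consOperator h c ^ 2 ^ 2 ^ t := by
      obtain ⟨r, hr⟩ :=
        (commute_consOperator h b c).exists_add_pow_prime_pow_eq Nat.prime_two (2 ^ t)
      rw [hr, mul_assoc, mul_assoc, Nat.cast_two, two_mul, ZModModule.add_self, add_zero]
    have hpow : 2 ^ 2 ^ (t + 1) = 2 ^ 2 ^ t * 2 ^ 2 ^ t := by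
      rw [← pow_add, ← two_mul, ← pow_succ']
    rw [hpow, pow_mul, ih, hfrob, ih, ih, ← mul_assoc, add_assoc,
      ← add_assoc (consOperator h (2 ^ 2 ^ t * a)), ZModModule.add_self, zero_add]

lemma consOperator_one_pow {h t : ℕ} (ht : h ≤ 2 ^ 2 ^ t) (k : ℕ) :
    consOperator h 1 ^ (1 + k * (2 ^ 2 ^ t - 1)) = consOperator h 1 := by
  have hperiod : consOperator h 1 ^ 2 ^ 2 ^ t = consOperator h 1 := by
    rw [consOperator_pow_two_pow_two_pow, mul_one, consOperator_eq_zero ht, add_zero]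
  have hone : 1 ≤ 2 ^ 2 ^ t := Nat.one_le_two_pow
  induction k with
  | zero => simp
  | succ k ih =>
    rw [add_one_mul, ← add_assoc, pow_add, ih, ← pow_succ', Nat.sub_add_cancel hone, hperiod]

variable {V : Type*} (H : SimpleGraph V)

/-- The parity of graphs with `H`-free blow-up, as a function of the multiset of clique sizes. -/
noncomputable def weightParity (m : Multiset ℕ) : ZMod 2 :=
  blowUpFreeParity H (fun x : m => (x : ℕ))

lemma weightParity_cons (a : ℕ) (m : Multiset ℕ) :
    weightParity H (a ::ₘ m) = blowUpFreeParity H (Option.elim' a fun x : m => (x : ℕ)) := by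
  rw [weightParity, ← blowUpFreeParity_comp_equiv Multiset.consEquiv.symm]
  congr 1
  funext x
  rcases x with _ | x <;> rfl

lemma weightParity_cons_cons (a b : ℕ) (m : Multiset ℕ) :
    weightParity H (a ::ₘ b ::ₘ m) =
      blowUpFreeParity H (Option.elim' a (Option.elim' b fun x : m => (x : ℕ))) := by
  rw [weightParity_cons, ← blowUpFreeParity_comp_equiv Multiset.consEquiv.symm.optionCongr]
  congr 1
  funext x
  rcases x with _ | _ | x <;> rfl

lemma weightParity_mem_twinSubmodule [Fintype V] :
    weightParity H ∈ twinSubmodule (Fintype.card V) := by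
  refine ⟨fun a m => ?_, fun a m ha => ?_⟩
  · rw [weightParity_cons_cons, blowUpFreeParity_twin, weightParity_cons, weightParity_cons]
  · suffices {G | IsEmpty (H →g cliqueBlowUp (Option.elim' a fun x : m => (x : ℕ)) G)} = ∅ by
      rw [weightParity_cons, blowUpFreeParity, this, Set.ncard_empty, Nat.cast_zero]
    refine Set.eq_empty_of_forall_notMem fun G hG => hG.elim
      ⟨fun v => ⟨none, Fin.castLE ha (Fintype.equivFin V v)⟩, fun hvw => Or.inr ⟨rfl, ?_⟩⟩
    exact fun h => hvw.ne ((Fintype.equivFin V).injective (Fin.ext h))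

lemma isEmpty_hom_cliqueBlowUp_one_iff {I : Type*} (G : SimpleGraph I) :
    IsEmpty (H →g cliqueBlowUp (fun _ => 1) G) ↔ IsEmpty (H →g G) :=
  isEmpty_hom_congr
    ⟨Sigma.fst, fun h => h.resolve_right fun h => h.2 (congrArg Fin.val (Subsingleton.elim _ _))⟩
    ⟨fun i => ⟨i, 0⟩, Or.inl⟩

lemma weightParity_replicate_one (I : Type*) [Fintype I] :
    weightParity H (Multiset.replicate (Fintype.card I) 1) =
      ({G : SimpleGraph I | IsEmpty (H →g G)}.ncard : ZMod 2) := by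
  let e : (Multiset.replicate (Fintype.card I) 1).ToType ≃ I := Fintype.equivOfCardEq (by simp)
  have he : (fun x : (Multiset.replicate (Fintype.card I) 1).ToType => x.1) = (fun _ => 1) ∘ e :=
    funext fun x => Multiset.eq_of_mem_replicate (Multiset.coe_mem (x := x))
  rw [weightParity, he, blowUpFreeParity_comp_equiv, blowUpFreeParity]
  simp only [isEmpty_hom_cliqueBlowUp_one_iff]

variable {H}

lemma ncard_isEmpty_hom_of_unique (hH : H.edgeSet.Nonempty) {I : Type*} [Unique I] :
    {G : SimpleGraph I | IsEmpty (H →g G)}.ncard = 1 := by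
  obtain ⟨v, w, hvw⟩ := SimpleGraph.ne_bot_iff_exists_adj.1 (SimpleGraph.edgeSet_nonempty.1 hH)
  refine Set.ncard_eq_one.2 ⟨⊥, Set.eq_singleton_iff_unique_mem.2
    ⟨⟨fun φ => φ.map_adj hvw⟩, fun G _ => Subsingleton.elim _ _⟩⟩

theorem odd_ncard_isEmpty_hom [Fintype V] (hH : H.edgeSet.Nonempty) {t k : ℕ}
    (ht : Fintype.card V ≤ 2 ^ 2 ^ t) {J : Type*} [Fintype J]
    (hJ : Fintype.card J = 1 + k * (2 ^ 2 ^ t - 1)) :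
    Odd {G : SimpleGraph J | IsEmpty (H →g G)}.ncard := by
  have hpow := consOperator_pow_apply (Fintype.card V) 1 (Fintype.card J)
    ⟨_, weightParity_mem_twinSubmodule H⟩ 0
  rw [hJ, consOperator_one_pow ht, consOperator_apply, ← hJ, add_zero] at hpow
  rw [← ZMod.natCast_eq_one_iff_odd, ← weightParity_replicate_one]
  refine hpow.symm.trans ((weightParity_replicate_one H Unit).trans ?_)
  rw [ncard_isEmpty_hom_of_unique hH, Nat.cast_one]

end WeightAlgebra

section PaleyClique

open Finset

variable {F : Type*} [Field F]

lemma sum_sum_mul_translate_eq_zero [Fintype F] {f : F → ℝ} (hf : ∑ x, f x = 0) {s : F}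
    (hs : s ≠ 0) :
    ∑ c, ∑ x, f x * f (x + c * s) = 0 := by
  have htranslate (x : F) : ∑ c, f (x + c * s) = ∑ y, f y :=
    Equiv.sum_comp ((Equiv.mulRight₀ s hs).trans (Equiv.addLeft x)) f
  rw [sum_comm]
  simp only [← mul_sum, htranslate, hf, mul_zero, sum_const_zero]

/-- The adjacency operator of the Cayley graph on the additive group of a field whose connection
set is the multiplicative coset `c • K`. -/
def cosetSum (K : Subgroup Fˣ) [Fintype K] (c : F) (f : F → ℝ) (x : F) : ℝ :=
  ∑ u : K, f (x + c * (u : Fˣ))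

open Classical in
/-- The elements of `S` adjacent to `x` in the Cayley graph with connection set `c • K`. -/
noncomputable def cosetNeighbors (K : Subgroup Fˣ) (c : F) (S : Finset F) (x : F) : Finset F :=
  {y ∈ S | ∃ u ∈ K, y - x = c * u}

lemma mem_cosetNeighbors {K : Subgroup Fˣ} {c : F} {S : Finset F} {x y : F} :
    y ∈ cosetNeighbors K c S x ↔ y ∈ S ∧ ∃ u ∈ K, y - x = c * u := by
  simp [cosetNeighbors]

/-- The indicator function of `S`, shifted by a constant so that its sum vanishes. -/
noncomputable def balancedIndicator [Fintype F] [DecidableEq F] (S : Finset F) (x : F) : ℝ :=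
  (if x ∈ S then 1 else 0) - #S / Fintype.card F

variable (K : Subgroup Fˣ) [Fintype K]

lemma cosetSum_mul_mem (c : F) (a : K) (f : F → ℝ) :
    cosetSum K (c * (a : Fˣ)) f = cosetSum K c f := by
  funext x
  refine Fintype.sum_equiv (Equiv.mulLeft a) _ _ fun u => ?_
  simp [mul_assoc]

variable [Fintype F]

lemma sum_cosetSum_sq (c : F) (f : F → ℝ) :
    ∑ x, cosetSum K c f x ^ 2 =
      ∑ u : K, ∑ v : K, ∑ x, f x * f (x + c * ((v : Fˣ) - (u : Fˣ))) := by
  simp only [cosetSum, sq, sum_mul_sum]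
  rw [sum_comm]
  refine sum_congr rfl fun u _ => ?_
  rw [sum_comm]
  refine sum_congr rfl fun v _ => Fintype.sum_equiv (Equiv.addRight (c * (u : Fˣ))) _ _ fun x => ?_
  rw [Equiv.coe_addRight]
  congr 2
  ring

lemma sum_sum_cosetSum_sq {f : F → ℝ} (hf : ∑ x, f x = 0) :
    ∑ c, ∑ x, cosetSum K c f x ^ 2 =
      Fintype.card K * (Fintype.card F * ∑ x, f x ^ 2) := by
  classical
  have horthogonal (u v : K) : ∑ c : F, ∑ x, f x * f (x + c * ((v : Fˣ) - (u : Fˣ))) =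
      if v = u then Fintype.card F * ∑ x, f x ^ 2 else 0 := by
    split_ifs with h
    · simp [h, sq]
    · exact sum_sum_mul_translate_eq_zero hf
        (sub_ne_zero.2 fun h' => h (Subtype.ext (Units.ext h')))
  simp only [sum_cosetSum_sq]
  rw [sum_comm]
  have hinner (u : K) : ∑ c : F, ∑ v : K, ∑ x, f x * f (x + c * ((v : Fˣ) - (u : Fˣ))) =
      Fintype.card F * ∑ x, f x ^ 2 := by
    rw [sum_comm]
    simp [horthogonal]
  simp [hinner]

lemma sum_cosetSum_sq_le {f : F → ℝ} (hf : ∑ x, f x = 0) {c : F} (hc : c ≠ 0) :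
    ∑ x, cosetSum K c f x ^ 2 ≤ Fintype.card F * ∑ x, f x ^ 2 := by
  classical
  have hinj : Set.InjOn (fun a : K => c * ((a : Fˣ) : F)) (univ : Finset K) :=
    fun a _ b _ hab => Subtype.ext (Units.ext (mul_left_cancel₀ hc hab))
  have hK : (0 : ℝ) < Fintype.card K := Nat.cast_pos.2 Fintype.card_pos
  refine le_of_mul_le_mul_left ?_ hK
  calc (Fintype.card K : ℝ) * ∑ x, cosetSum K c f x ^ 2
      = ∑ a : K, ∑ x, cosetSum K (c * (a : Fˣ)) f x ^ 2 := by simp [cosetSum_mul_mem]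
    _ = ∑ b ∈ univ.image fun a : K => c * ((a : Fˣ) : F), ∑ x, cosetSum K b f x ^ 2 :=
        (sum_image (f := fun b => ∑ x, cosetSum K b f x ^ 2) hinj).symm
    _ ≤ ∑ b, ∑ x, cosetSum K b f x ^ 2 :=
        sum_le_univ_sum_of_nonneg fun b => sum_nonneg fun x _ => sq_nonneg _
    _ = _ := sum_sum_cosetSum_sq K hf

lemma sum_balancedIndicator [DecidableEq F] (S : Finset F) : ∑ x, balancedIndicator S x = 0 := by
  simp only [balancedIndicator, sum_sub_distrib, sum_boole, sum_const, card_univ, nsmul_eq_mul,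
    filter_mem_eq_inter, univ_inter]
  field_simp
  ring

lemma sum_balancedIndicator_sq_le [DecidableEq F] (S : Finset F) :
    ∑ x, balancedIndicator S x ^ 2 ≤ #S := by
  have hsq (x : F) : balancedIndicator S x ^ 2 = (if x ∈ S then (1 : ℝ) else 0) -
      #S / Fintype.card F * (if x ∈ S then 1 else 0) -
        #S / Fintype.card F * balancedIndicator S x := by
    simp only [balancedIndicator]
    split_ifs <;> ring
  simp only [hsq, sum_sub_distrib, ← mul_sum, sum_balancedIndicator, sum_boole,
    filter_mem_eq_inter, univ_inter, mul_zero, sub_zero]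
  exact sub_le_self _ (by positivity)

lemma cosetSum_balancedIndicator_le [DecidableEq F] {c : F} (hc : c ≠ 0) (S : Finset F) (x : F) :
    cosetSum K c (balancedIndicator S) x ≤
      #(cosetNeighbors K c S x) - Fintype.card K * (#S / Fintype.card F) := by
  have hcard : #{u : K | x + c * ((u : Fˣ) : F) ∈ S} ≤ #(cosetNeighbors K c S x) := by
    refine card_le_card_of_injOn (fun u => x + c * ((u : Fˣ) : F)) (fun u hu => ?_)
      fun a _ b _ hab => Subtype.ext (Units.ext (mul_left_cancel₀ hc (add_left_cancel hab)))
    exact mem_cosetNeighbors.2 ⟨(mem_filter.1 hu).2, u, u.2, add_sub_cancel_left _ _⟩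
  simp only [cosetSum, balancedIndicator, sum_sub_distrib, sum_const, card_univ, nsmul_eq_mul,
    sum_boole]
  gcongr

lemma exists_le_card_cosetNeighbors {c : F} (hc : c ≠ 0) {S : Finset F}
    (hS : 4 * Fintype.card F ^ 3 < Fintype.card K ^ 2 * #S ^ 2) :
    ∃ x ∈ S, Fintype.card K * #S ≤ 2 * Fintype.card F * #(cosetNeighbors K c S x) := by
  classical
  by_contra! hsparse
  have : (0 : ℝ) < Fintype.card F := mod_cast Fintype.card_pos
  have hS0 : 0 < #S := Nat.pos_of_ne_zero fun h => by simp [h] at hS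
  set b : ℝ := Fintype.card K * #S / (2 * Fintype.card F) with hb
  have hlarge : ∀ x ∈ S, b ^ 2 ≤ cosetSum K c (balancedIndicator S) x ^ 2 := fun x hx => by
    have hnbr : (#(cosetNeighbors K c S x) : ℝ) ≤ b := by
      rw [hb, le_div_iff₀' (by positivity)]
      exact_mod_cast (hsparse x hx).le
    have htwo : Fintype.card K * (#S / Fintype.card F : ℝ) = 2 * b := by
      rw [hb]
      field_simp
    rw [← neg_sq (cosetSum _ _ _ _)]
    refine pow_le_pow_left₀ (by positivity) ?_ 2
    linarith [cosetSum_balancedIndicator_le K hc S x]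
  have hbound : #S * b ^ 2 ≤ #S * Fintype.card F := by
    calc #S * b ^ 2 ≤ ∑ x ∈ S, cosetSum K c (balancedIndicator S) x ^ 2 := by
          simpa using card_nsmul_le_sum S _ _ hlarge
      _ ≤ ∑ x, cosetSum K c (balancedIndicator S) x ^ 2 :=
          sum_le_univ_sum_of_nonneg fun x => sq_nonneg _
      _ ≤ Fintype.card F * ∑ x, balancedIndicator S x ^ 2 :=
          sum_cosetSum_sq_le K (sum_balancedIndicator S) hc
      _ ≤ Fintype.card F * #S := by gcongr; exact sum_balancedIndicator_sq_le S
      _ = #S * Fintype.card F := mul_comm _ _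
  have hb2 := le_of_mul_le_mul_left hbound (mod_cast hS0)
  rw [hb, div_pow, div_le_iff₀ (by positivity)] at hb2
  have hS' : (4 * Fintype.card F ^ 3 : ℝ) < Fintype.card K ^ 2 * #S ^ 2 := mod_cast hS
  linarith

lemma exists_clique_of_card_lt_sq {M : ℕ} (hM : Fintype.card F ≤ M * Fintype.card K) {c : F}
    (hc : c ≠ 0) (k : ℕ) (S : Finset F) (hS : Fintype.card F * (2 * M) ^ (2 * k) < #S ^ 2) :
    ∃ v : Fin (k + 1) → F, (∀ i, v i ∈ S) ∧ ∀ i j, i < j → ∃ u ∈ K, v j - v i = c * u := by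
  have hq : 0 < Fintype.card F := Fintype.card_pos
  have hM0 : 0 < M := Nat.pos_of_mul_pos_right (hq.trans_le hM)
  induction k generalizing S with
  | zero =>
    obtain ⟨x, hx⟩ := card_pos.1 (Nat.pos_of_ne_zero fun h : #S = 0 => by simp [h] at hS)
    exact ⟨fun _ => x, fun _ => hx, fun i j hij => absurd hij (by omega)⟩
  | succ k ih =>
    have hdense : 4 * Fintype.card F ^ 3 < Fintype.card K ^ 2 * #S ^ 2 := by
      calc 4 * Fintype.card F ^ 3 = 4 * Fintype.card F * Fintype.card F ^ 2 := by ring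
        _ ≤ 4 * Fintype.card F * (M * Fintype.card K) ^ 2 := by gcongr
        _ = Fintype.card K ^ 2 * (Fintype.card F * (2 * M) ^ 2) := by ring
        _ ≤ Fintype.card K ^ 2 * (Fintype.card F * (2 * M) ^ (2 * (k + 1))) := by
          gcongr
          · omega
          · omega
        _ < Fintype.card K ^ 2 * #S ^ 2 := by gcongr
    obtain ⟨x, hx, hxS⟩ := exists_le_card_cosetNeighbors K hc hdense
    have hcard : #S ≤ 2 * M * #(cosetNeighbors K c S x) := by
      refine Nat.le_of_mul_le_mul_left (c := Fintype.card F) ?_ hq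
      calc Fintype.card F * #S ≤ M * Fintype.card K * #S := by gcongr
        _ = M * (Fintype.card K * #S) := mul_assoc _ _ _
        _ ≤ M * (2 * Fintype.card F * #(cosetNeighbors K c S x)) := by gcongr
        _ = _ := by ring
    obtain ⟨v, hv, hvK⟩ := ih (cosetNeighbors K c S x) <| by
      refine Nat.lt_of_mul_lt_mul_left (a := (2 * M) ^ 2) ?_
      calc (2 * M) ^ 2 * (Fintype.card F * (2 * M) ^ (2 * k))
          = Fintype.card F * (2 * M) ^ (2 * (k + 1)) := by ring
        _ < #S ^ 2 := hS
        _ ≤ (2 * M * #(cosetNeighbors K c S x)) ^ 2 := by gcongr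
        _ = _ := mul_pow _ _ _
    refine ⟨Fin.cons x v, Fin.cases hx fun i => (mem_cosetNeighbors.1 (hv i)).1, fun i j hij => ?_⟩
    cases j using Fin.cases with
    | zero => exact absurd hij (Fin.not_lt_zero i)
    | succ j =>
      cases i using Fin.cases with
      | zero => simpa using (mem_cosetNeighbors.1 (hv j)).2
      | succ i => simpa using hvK i j (Fin.succ_lt_succ_iff.1 hij)

lemma four_mul_pow_lt {m k q : ℕ} (hmq : m ^ (2 * (k + 1)) ≤ q)
    (hq : 4 ^ ((k + 2) * (2 * (k + 1))) < q) : (4 * m) ^ (2 * k) < q := by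
  obtain hm | hm := le_or_gt (4 ^ (k + 1)) m
  · have hm0 : 0 < m := lt_of_lt_of_le (by positivity) hm
    calc (4 * m) ^ (2 * k) = (4 ^ k) ^ 2 * m ^ (2 * k) := by ring
      _ < m ^ 2 * m ^ (2 * k) := by
        gcongr
        exact (Nat.pow_lt_pow_right (by norm_num) (Nat.lt_succ_self k)).trans_le hm
      _ = m ^ (2 * (k + 1)) := by ring
      _ ≤ q := hmq
  · calc (4 * m) ^ (2 * k) ≤ (4 * 4 ^ (k + 1)) ^ (2 * k) := by gcongr
      _ = 4 ^ ((k + 2) * (2 * k)) := by rw [← pow_succ', ← pow_mul]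
      _ ≤ 4 ^ ((k + 2) * (2 * (k + 1))) := by gcongr <;> omega
      _ < q := hq

theorem exists_clique_of_index_pow_le {m h : ℕ} (hm : Fintype.card F - 1 = m * Fintype.card K)
    (hh : 0 < h) (hmF : m ^ (2 * h) ≤ Fintype.card F)
    (hF : 4 ^ ((h + 1) * (2 * h)) < Fintype.card F) {c : F} (hc : c ≠ 0) :
    ∃ v : Fin h → F, ∀ i j, i < j → ∃ u ∈ K, v j - v i = c * u := by
  obtain ⟨k, rfl⟩ := Nat.exists_eq_succ_of_ne_zero hh.ne'
  have hF2 : 1 < Fintype.card F := Fintype.one_lt_card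
  have hM : Fintype.card F ≤ 2 * m * Fintype.card K := by
    rw [mul_assoc, ← hm]
    omega
  obtain ⟨v, -, hv⟩ := exists_clique_of_card_lt_sq K hM hc k univ <| by
    rw [card_univ, sq, ← mul_assoc 2 2]
    exact Nat.mul_lt_mul_of_pos_left (four_mul_pow_lt hmF hF) (by omega)
  exact ⟨v, hv⟩

end PaleyClique

section GraphAut

variable {W : Type*}

/-- The automorphism group of a graph, as a group of permutations of the vertices. -/
def graphAut (G : SimpleGraph W) : Subgroup (Equiv.Perm W) where
  carrier := {e | comapOrderIso e G = G}
  one_mem' := rfl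
  mul_mem' {_ b} ha hb := (congrArg (comapOrderIso b) ha).trans hb
  inv_mem' {a} ha := by
    refine (congrArg (comapOrderIso a⁻¹) ha).symm.trans ?_
    ext x y
    simp [comapOrderIso_adj]

variable {G : SimpleGraph W} {e a : Equiv.Perm W}

lemma mem_graphAut : e ∈ graphAut G ↔ comapOrderIso e G = G := Iff.rfl

lemma adj_iff_of_mem_graphAut (he : e ∈ graphAut G) (x y : W) :
    G.Adj (e x) (e y) ↔ G.Adj x y := by
  rw [← comapOrderIso_adj, mem_graphAut.1 he]

lemma mem_graphAut_comapOrderIso :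
    a ∈ graphAut (comapOrderIso e G) ↔ e * a * e⁻¹ ∈ graphAut G := by
  rw [mem_graphAut, mem_graphAut, ← (comapOrderIso e).injective.eq_iff (a := comapOrderIso _ G)]
  suffices comapOrderIso e (comapOrderIso (e * a * e⁻¹) G) =
      comapOrderIso a (comapOrderIso e G) by rw [this]
  ext x y
  simp [comapOrderIso_adj]

lemma comapOrderIso_iterate (e : Equiv.Perm W) (G : SimpleGraph W) (k : ℕ) :
    (comapOrderIso e)^[k] G = comapOrderIso (e ^ k) G := by
  induction k with
  | zero => rfl
  | succ k ih =>
    rw [Function.iterate_succ_apply', ih, pow_succ]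
    rfl

end GraphAut

section Blocks

variable {J : Type*} {F : J → Type*} [∀ j, Field (F j)]

/-- Translation of every block `F j` of the disjoint union by `b j`. -/
def blockTranslate (b : ∀ j, F j) : Equiv.Perm (Σ j, F j) :=
  Equiv.sigmaCongrRight fun j => Equiv.addRight (b j)

/-- Multiplication of every block `F j` of the disjoint union by `u j`. -/
def blockScale : (∀ j, (F j)ˣ) →* Equiv.Perm (Σ j, F j) where
  toFun u := Equiv.sigmaCongrRight fun j => Units.mulLeft (u j)
  map_one' := by
    ext ⟨j, x⟩ : 1
    simp
  map_mul' u v := by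
    ext ⟨j, x⟩ : 1
    simp [mul_assoc]

lemma blockTranslate_apply (b : ∀ j, F j) (j : J) (x : F j) :
    blockTranslate b ⟨j, x⟩ = ⟨j, x + b j⟩ := rfl

lemma blockScale_apply (u : ∀ j, (F j)ˣ) (j : J) (x : F j) :
    blockScale u ⟨j, x⟩ = ⟨j, u j * x⟩ := rfl

lemma blockTranslate_zero : blockTranslate (0 : ∀ j, F j) = 1 := by
  ext ⟨j, x⟩ : 1
  simp [blockTranslate_apply]

lemma blockTranslate_add (a b : ∀ j, F j) :
    blockTranslate (a + b) = blockTranslate a * blockTranslate b := by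
  ext ⟨j, x⟩ : 1
  simp [blockTranslate_apply, add_assoc, add_comm (a j)]

lemma commute_blockTranslate (a b : ∀ j, F j) :
    Commute (blockTranslate a) (blockTranslate b) := by
  rw [Commute, SemiconjBy, ← blockTranslate_add, add_comm, blockTranslate_add]

lemma blockScale_mul_blockTranslate (u : ∀ j, (F j)ˣ) (b : ∀ j, F j) :
    blockScale u * blockTranslate b = blockTranslate (fun j => u j * b j) * blockScale u := by
  ext ⟨j, x⟩ : 1
  simp [blockTranslate_apply, blockScale_apply, mul_add]

section MixedPerm

variable (T : Set J) [∀ j, Decidable (j ∈ T)] (l : ∀ j, (F j)ˣ)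

/-- The permutation scaling the blocks `F j` with `j ∈ T` by `l j` and translating all other
blocks by `1`. -/
def mixedPerm : Equiv.Perm (Σ j, F j) :=
  blockTranslate (T.piecewise 0 1) * blockScale (T.piecewise l 1)

variable {T}

lemma mixedPerm_pow_apply_of_mem {j : J} (hj : j ∈ T) (k : ℕ) (x : F j) :
    (mixedPerm T l ^ k) ⟨j, x⟩ = ⟨j, ((l j ^ k : (F j)ˣ) : F j) * x⟩ := by
  induction k with
  | zero => simp
  | succ k ih =>
    rw [pow_succ', Equiv.Perm.mul_apply, ih]
    simp [mixedPerm, blockTranslate_apply, blockScale_apply, hj, pow_succ', mul_assoc]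

lemma mixedPerm_pow_apply_of_notMem {j : J} (hj : j ∉ T) (k : ℕ) (x : F j) :
    (mixedPerm T l ^ k) ⟨j, x⟩ = ⟨j, x + k⟩ := by
  induction k with
  | zero => simp
  | succ k ih =>
    rw [pow_succ', Equiv.Perm.mul_apply, ih]
    simp [mixedPerm, blockTranslate_apply, blockScale_apply, hj, add_assoc]

lemma mixedPerm_pow_eq_blockTranslate {k : ℕ} {b : ∀ j, F j}
    (hb : ∀ j ∉ T, (k : F j) = b j) (hl : ∀ j ∈ T, l j ^ k = 1) :
    mixedPerm T l ^ k = blockTranslate (T.piecewise 0 b) := by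
  ext ⟨j, x⟩ : 1
  by_cases hj : j ∈ T
  · rw [mixedPerm_pow_apply_of_mem l hj, hl j hj]
    simp [blockTranslate_apply, hj]
  · rw [mixedPerm_pow_apply_of_notMem l hj, hb j hj]
    simp [blockTranslate_apply, hj]

lemma mixedPerm_mul_blockTranslate (b : ∀ j, F j) :
    mixedPerm T l * blockTranslate b =
      blockTranslate (fun j => (T.piecewise l 1 j : F j) * b j) * mixedPerm T l := by
  rw [mixedPerm, mul_assoc, blockScale_mul_blockTranslate, ← mul_assoc, ← mul_assoc,
    (commute_blockTranslate _ _).eq]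

lemma mixedPerm_mem_and_blockTranslate_mem_iff {A : Subgroup (Equiv.Perm (Σ j, F j))}
    (hgen : ∀ b : ∀ j, F j, ∃ k : ℕ, (∀ j ∉ T, (k : F j) = b j) ∧ ∀ j ∈ T, l j ^ k = 1) :
    ((∀ b : ∀ j, F j, (∀ j ∉ T, b j = 0) → blockTranslate b ∈ A) ∧ mixedPerm T l ∈ A) ↔
      (∀ b : ∀ j, F j, blockTranslate b ∈ A) ∧ blockScale (T.piecewise l 1) ∈ A := by
  refine ⟨fun ⟨hbinary, hmixed⟩ => ?_, fun ⟨htranslate, hscale⟩ =>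
    ⟨fun b _ => htranslate b, mul_mem (htranslate _) hscale⟩⟩
  have htranslate (b : ∀ j, F j) : blockTranslate b ∈ A := by
    obtain ⟨k, hb, hl⟩ := hgen b
    have hsplit : b = T.piecewise b (0 : ∀ j, F j) + T.piecewise (0 : ∀ j, F j) b := by
      funext j
      by_cases hj : j ∈ T <;> simp [hj]
    rw [hsplit, blockTranslate_add, ← mixedPerm_pow_eq_blockTranslate l hb hl]
    exact mul_mem (hbinary _ fun j hj => by simp [hj]) (pow_mem hmixed k)
  exact ⟨htranslate, (mul_mem_cancel_left (htranslate _)).1 hmixed⟩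

end MixedPerm

section ChineseRemainder

lemma exists_forall_modEq_natCast_eq {K : Type*} [Field K] [Fintype K]
    (hK : (Fintype.card K).Prime) (c : K) :
    ∃ a : ℕ, ∀ k : ℕ, k ≡ a [MOD Fintype.card K] → (k : K) = c := by
  have : Fact (Fintype.card K).Prime := ⟨hK⟩
  have := charP_of_card_eq_prime (R := K) rfl
  let φ := ZMod.ringEquivOfPrime K hK rfl
  have : NeZero (Fintype.card K) := ⟨hK.ne_zero⟩
  refine ⟨(φ.symm c).val, fun k hk => ?_⟩
  rw [(CharP.cast_eq_iff_mod_eq K (Fintype.card K)).2 hk, ← map_natCast φ, ZMod.natCast_zmod_val,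
    φ.apply_symm_apply]

lemma exists_natCast_eq_and_pow_eq_one [Finite J] [∀ j, Fintype (F j)] {T : Set J}
    {l : ∀ j, (F j)ˣ} (hprime : ∀ j ∉ T, (Fintype.card (F j)).Prime)
    (hinj : Tᶜ.InjOn fun j => Fintype.card (F j))
    (hcop : ∀ i ∈ T, ∀ j ∉ T, (Fintype.card (F j)).Coprime (orderOf (l i))) (b : ∀ j, F j) :
    ∃ k : ℕ, (∀ j ∉ T, (k : F j) = b j) ∧ ∀ j ∈ T, l j ^ k = 1 := by
  classical
  have := Fintype.ofFinite J
  let D := ∏ i with i ∈ T, orderOf (l i)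
  have hD (j : J) (hj : j ∉ T) : (D : F j) ≠ 0 := by
    have : Fact (Fintype.card (F j)).Prime := ⟨hprime j hj⟩
    have := charP_of_card_eq_prime (R := F j) rfl
    rw [Ne, CharP.cast_eq_zero_iff (F j) (Fintype.card (F j)),
      ← (hprime j hj).coprime_iff_not_dvd]
    exact Nat.Coprime.prod_right fun i hi => hcop i (Finset.mem_filter.1 hi).2 j hj
  choose! a ha using fun j (hj : j ∉ T) =>
    exists_forall_modEq_natCast_eq (hprime j hj) (b j / D)
  obtain ⟨k, hk⟩ := Nat.chineseRemainderOfFinset a (fun j => Fintype.card (F j)) {j | j ∉ T}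
    (fun j _ => Fintype.card_ne_zero) fun i hi j hj hij =>
      (Nat.coprime_primes (hprime i (by simpa using hi)) (hprime j (by simpa using hj))).2
        (hinj.ne (by simpa using hi) (by simpa using hj) hij)
  refine ⟨D * k, fun j hj => ?_, fun j hj => orderOf_dvd_iff_pow_eq_one.1 <|
    (Finset.dvd_prod_of_mem _ (by simpa using hj)).mul_right k⟩
  rw [Nat.cast_mul, ha j hj k (hk j (by simpa using hj)), mul_div_cancel₀ _ (hD j hj)]

end ChineseRemainder

end Blocks

section BlockInvariant

/-- For every `c ≠ 0`, the Cayley graph on `F` with connection set `± c • K` has a clique on a copy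
of `V`. -/
def HasCosetCliques (V : Type*) {F : Type*} [Field F] (K : Subgroup Fˣ) : Prop :=
  ∀ c : F, c ≠ 0 → ∃ f : V ↪ F, ∀ v w, v ≠ w →
    ∃ u ∈ K, f w - f v = c * u ∨ f v - f w = c * u

variable {V J : Type} {H : SimpleGraph V} {F : J → Type}

lemma containsCopy_comap_fst_iff (hemb : ∀ j, Nonempty (V ↪ F j)) (G : SimpleGraph J) :
    ContainsCopy H (G.comap (Sigma.fst : (Σ j, F j) → J)) ↔ Nonempty (H →g G) := by
  refine ⟨fun ⟨f, _, h⟩ => ⟨⟨fun v => (f v).1, fun {v w} hvw => h v w hvw⟩⟩, fun ⟨φ⟩ => ?_⟩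
  let f (j : J) : V ↪ F j := (hemb j).some
  refine ⟨fun v => ⟨φ v, f (φ v) v⟩, fun v w hvw => ?_, fun v w hvw => φ.map_adj hvw⟩
  have hφ : φ v = φ w := congrArg Sigma.fst hvw
  have hf : (⟨φ v, f (φ v) v⟩ : Σ j, F j) = ⟨φ v, f (φ v) w⟩ :=
    hvw.trans (congrArg (fun j => (⟨j, f j w⟩ : Σ j, F j)) hφ.symm)
  exact (f (φ v)).injective (sigma_mk_injective hf)

variable [∀ j, Field (F j)] {l : ∀ j, (F j)ˣ} {G : SimpleGraph (Σ j, F j)}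

lemma adj_of_sub_eq_mul_mem_zpowers (htranslate : ∀ b : ∀ j, F j, blockTranslate b ∈ graphAut G)
    (hscale : blockScale l ∈ graphAut G) {j : J} {x y x' y' : F j} (hxy : G.Adj ⟨j, x⟩ ⟨j, y⟩)
    {u : (F j)ˣ} (hu : u ∈ Subgroup.zpowers (l j)) (h : y' - x' = (y - x) * u) :
    G.Adj ⟨j, x'⟩ ⟨j, y'⟩ := by
  classical
  obtain ⟨k, rfl⟩ := hu
  have hscaled := (adj_iff_of_mem_graphAut (zpow_mem hscale k) _ _).2 hxy
  rw [← map_zpow, blockScale_apply, blockScale_apply] at hscaled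
  have hmoved := (adj_iff_of_mem_graphAut (htranslate (Pi.single j (x' - (l ^ k) j * x))) _ _).2
    hscaled
  rw [blockTranslate_apply, blockTranslate_apply, Pi.single_eq_same] at hmoved
  convert hmoved using 2
  · ring
  · simp only [Pi.pow_apply]
    linear_combination h

lemma not_adj_of_not_containsCopy (hclique : ∀ j, HasCosetCliques V (Subgroup.zpowers (l j)))
    (htranslate : ∀ b : ∀ j, F j, blockTranslate b ∈ graphAut G)
    (hscale : blockScale l ∈ graphAut G) (hG : ¬ ContainsCopy H G) (j : J) (x y : F j) :
    ¬ G.Adj ⟨j, x⟩ ⟨j, y⟩ := by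
  intro hxy
  have hne : y - x ≠ 0 := sub_ne_zero.2 fun h => G.ne_of_adj hxy (h ▸ rfl)
  obtain ⟨f, hf⟩ := hclique j _ hne
  refine hG ⟨fun v => ⟨j, f v⟩, sigma_mk_injective.comp f.injective, fun v w hvw => ?_⟩
  obtain ⟨u, hu, h | h⟩ := hf v w (H.ne_of_adj hvw)
  · exact adj_of_sub_eq_mul_mem_zpowers htranslate hscale hxy hu h
  · exact (adj_of_sub_eq_mul_mem_zpowers htranslate hscale hxy hu h).symm

lemma comap_fst_comap_mk_zero (htranslate : ∀ b : ∀ j, F j, blockTranslate b ∈ graphAut G)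
    (hadj : ∀ j (x y : F j), ¬ G.Adj ⟨j, x⟩ ⟨j, y⟩) :
    (G.comap fun j => (⟨j, 0⟩ : Σ j, F j)).comap Sigma.fst = G := by
  classical
  ext ⟨i, x⟩ ⟨j, y⟩
  rw [SimpleGraph.comap_adj, SimpleGraph.comap_adj]
  obtain rfl | hij := eq_or_ne i j
  · simp [hadj]
  · have h := adj_iff_of_mem_graphAut (htranslate (Pi.single i x + Pi.single j y)) ⟨i, 0⟩ ⟨j, 0⟩
    simpa [blockTranslate_apply, hij, hij.symm] using h.symm

lemma blockScale_mem_graphAut_comap_fst (G : SimpleGraph J) (u : ∀ j, (F j)ˣ) :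
    blockScale u ∈ graphAut (G.comap (Sigma.fst : (Σ j, F j) → J)) := rfl

/-- The `H`-free graphs on the disjoint union of the blocks `F j` that are invariant under all
translations of the blocks and under scaling the blocks by `l`. -/
def invariantFreeGraphs (H : SimpleGraph V) (l : ∀ j, (F j)ˣ) : Set (SimpleGraph (Σ j, F j)) :=
  {G | ¬ ContainsCopy H G ∧
    (∀ b : ∀ j, F j, blockTranslate b ∈ graphAut G) ∧ blockScale l ∈ graphAut G}

lemma invariantFreeGraphs_eq_image_comap_fst
    (hclique : ∀ j, HasCosetCliques V (Subgroup.zpowers (l j))) :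
    invariantFreeGraphs H l =
      (fun G : SimpleGraph J => G.comap Sigma.fst) '' {G | IsEmpty (H →g G)} := by
  have hemb (j : J) : Nonempty (V ↪ F j) := (hclique j 1 one_ne_zero).nonempty
  ext G
  constructor
  · rintro ⟨hG, htranslate, hscale⟩
    have hcomap := comap_fst_comap_mk_zero htranslate
      (not_adj_of_not_containsCopy hclique htranslate hscale hG)
    refine ⟨_, ?_, hcomap⟩
    rwa [Set.mem_ofPred_eq, ← not_nonempty_iff, ← containsCopy_comap_fst_iff hemb, hcomap]
  · rintro ⟨G, hG, rfl⟩
    refine ⟨?_, fun b => rfl, blockScale_mem_graphAut_comap_fst G l⟩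
    rwa [containsCopy_comap_fst_iff hemb, not_nonempty_iff]

lemma ncard_invariantFreeGraphs (hclique : ∀ j, HasCosetCliques V (Subgroup.zpowers (l j))) :
    (invariantFreeGraphs H l).ncard = {G : SimpleGraph J | IsEmpty (H →g G)}.ncard := by
  rw [invariantFreeGraphs_eq_image_comap_fst hclique]
  exact Set.ncard_image_of_injective _ fun G₁ G₂ h =>
    congrArg (SimpleGraph.comap fun j => (⟨j, 0⟩ : Σ j, F j)) h

lemma blockScale_mem_graphAut_of_mem_invariantFreeGraphs
    (hclique : ∀ j, HasCosetCliques V (Subgroup.zpowers (l j))) (hG : G ∈ invariantFreeGraphs H l)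
    (u : ∀ j, (F j)ˣ) : blockScale u ∈ graphAut G := by
  rw [invariantFreeGraphs_eq_image_comap_fst hclique] at hG
  obtain ⟨G, -, rfl⟩ := hG
  exact blockScale_mem_graphAut_comap_fst G u

lemma mapsTo_comapOrderIso_blockScale_invariantFreeGraphs (H : SimpleGraph V)
    (l u : ∀ j, (F j)ˣ) :
    Set.MapsTo (comapOrderIso (blockScale u)) (invariantFreeGraphs H l)
      (invariantFreeGraphs H l) := by
  rintro G ⟨hG, htranslate, hscale⟩
  refine ⟨by rwa [containsCopy_comapOrderIso_iff], fun b => ?_, ?_⟩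
  · rw [mem_graphAut_comapOrderIso, blockScale_mul_blockTranslate, mul_inv_cancel_right]
    exact htranslate _
  · rwa [mem_graphAut_comapOrderIso, ← map_mul, mul_comm u, map_mul, mul_inv_cancel_right]

lemma ncard_invariantFreeGraphs_piecewise_modEq_two [Finite J] [∀ j, Finite (F j)]
    (hclique : ∀ j, HasCosetCliques V (Subgroup.zpowers (l j)))
    {T : Set J} [∀ j, Decidable (j ∈ T)] {s : ℕ} (hs : ∀ j ∉ T, l j ^ 2 ^ s = 1) :
    (invariantFreeGraphs H (T.piecewise l 1)).ncard ≡
      {G : SimpleGraph J | IsEmpty (H →g G)}.ncard [MOD 2] := by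
  let u := T.piecewise 1 l
  have hl : T.piecewise l 1 * u = l := by
    funext j
    by_cases hj : j ∈ T <;> simp [u, hj]
  have hu : u ^ 2 ^ s = 1 := by
    funext j
    by_cases hj : j ∈ T <;> simp [u, hj, hs]
  have hfixed : {G | G ∈ invariantFreeGraphs H (T.piecewise l 1) ∧
      comapOrderIso (blockScale u) G = G} = invariantFreeGraphs H l := by
    ext G
    constructor
    · rintro ⟨⟨hG, htranslate, hscale⟩, hfixed⟩
      refine ⟨hG, htranslate, ?_⟩
      rw [← hl, map_mul]
      exact mul_mem hscale hfixed
    · intro hG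
      have hscale := blockScale_mem_graphAut_of_mem_invariantFreeGraphs hclique hG
      exact ⟨⟨hG.1, hG.2.1, hscale _⟩, hscale u⟩
  rw [← ncard_invariantFreeGraphs hclique, ← hfixed]
  refine ncard_modEq_ncard_fixed (k := s)
    (mapsTo_comapOrderIso_blockScale_invariantFreeGraphs H _ u) fun G _ => ?_
  rw [comapOrderIso_iterate, ← map_pow, hu, map_one]
  rfl

lemma forall_mixedPerm_conj_blockTranslate_iff (T : Set J) [∀ j, Decidable (j ∈ T)]
    (l : ∀ j, (F j)ˣ) (A : Subgroup (Equiv.Perm (Σ j, F j))) :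
    (∀ b : ∀ j, F j, (∀ j ∉ T, b j = 0) →
        mixedPerm T l * blockTranslate b * (mixedPerm T l)⁻¹ ∈ A) ↔
      ∀ b : ∀ j, F j, (∀ j ∉ T, b j = 0) → blockTranslate b ∈ A := by
  simp only [mixedPerm_mul_blockTranslate, mul_inv_cancel_right]
  refine ⟨fun h b hb => ?_, fun h b hb => h _ fun j hj => by rw [hb j hj, mul_zero]⟩
  simpa using h (fun j => ((T.piecewise l 1 j)⁻¹ : (F j)ˣ) * b j) fun j hj => by
    rw [hb j hj, mul_zero]

lemma involutive_comapOrderIso_blockTranslate {b : ∀ j, F j} (hb : b + b = 0) :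
    Function.Involutive (comapOrderIso (blockTranslate b)) := fun G => by
  change (comapOrderIso (blockTranslate b))^[2] G = G
  rw [comapOrderIso_iterate, sq, ← blockTranslate_add, hb, blockTranslate_zero]
  rfl

lemma commute_comapOrderIso_blockTranslate (a b : ∀ j, F j) :
    Function.Commute (comapOrderIso (blockTranslate a)) (comapOrderIso (blockTranslate b)) :=
  fun G => congrArg (comapOrderIso · G) (commute_blockTranslate b a).eq

theorem not_acyclicComplex_not_containsCopy [Finite J] [∀ j, Finite (F j)]
    [Fintype (SimpleGraph (Σ j, F j))] [DecidableEq (SimpleGraph (Σ j, F j))]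
    (hH : H.edgeSet.Nonempty) {T : Set J} (hT : ∀ j ∈ T, ∀ x : F j, x + x = 0)
    (hgen : ∀ b : ∀ j, F j, ∃ k : ℕ, (∀ j ∉ T, (k : F j) = b j) ∧ ∀ j ∈ T, l j ^ k = 1)
    (hclique : ∀ j, HasCosetCliques V (Subgroup.zpowers (l j)))
    {s : ℕ} (hs : ∀ j ∉ T, l j ^ 2 ^ s = 1)
    (hodd : Odd {G : SimpleGraph J | IsEmpty (H →g G)}.ncard) :
    ¬ AcyclicComplex
      (orderComplex ({G : SimpleGraph (Σ j, F j) | ¬ ContainsCopy H G} \ {⊥})) := by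
  classical
  intro hacyclic
  have hfinite : {b : ∀ j, F j | ∀ j ∉ T, b j = 0}.Finite := Set.toFinite _
  let P := hfinite.toFinset.image fun b => comapOrderIso (blockTranslate b)
  have hP (σ) : σ ∈ P ↔
      ∃ b : ∀ j, F j, (∀ j ∉ T, b j = 0) ∧ comapOrderIso (blockTranslate b) = σ := by
    simp [P]
  have hPfixed (G : SimpleGraph (Σ j, F j)) : (∀ σ ∈ P, σ G = G) ↔
      ∀ b : ∀ j, F j, (∀ j ∉ T, b j = 0) → blockTranslate b ∈ graphAut G := by
    simp [hP, mem_graphAut]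
  have heven := even_ncard_fixed_of_acyclicComplex isLowerSet_not_containsCopy
    (not_containsCopy_bot hH) hacyclic P ?_ ?_ ?_ (comapOrderIso (mixedPerm T l)) ?_ ?_
  · simp only [hPfixed, ← mem_graphAut, mixedPerm_mem_and_blockTranslate_mem_iff l hgen,
      Set.mem_ofPred_eq] at heven
    have hmod := ncard_invariantFreeGraphs_piecewise_modEq_two (H := H) hclique hs
    rw [Nat.odd_iff, ← hmod, ← Nat.odd_iff] at hodd
    exact Nat.not_even_iff_odd.2 hodd heven
  · simp only [hP]
    rintro _ ⟨b, hb, rfl⟩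
    refine involutive_comapOrderIso_blockTranslate (funext fun j => ?_)
    by_cases hj : j ∈ T
    · exact hT j hj (b j)
    · simp [hb j hj]
  · simp only [hP]
    rintro _ ⟨a, -, rfl⟩ _ ⟨b, -, rfl⟩
    exact commute_comapOrderIso_blockTranslate a b
  · simp only [hP]
    rintro _ ⟨b, -, rfl⟩ G
    exact not_congr (containsCopy_comapOrderIso_iff _ G)
  · exact fun G => not_congr (containsCopy_comapOrderIso_iff _ G)
  · intro G
    simp only [hPfixed, mem_graphAut_comapOrderIso, forall_mixedPerm_conj_blockTranslate_iff]

end BlockInvariant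

section HasCosetCliques

variable (V : Type*) [Fintype V] {F : Type*} [Field F] [Fintype F]

lemma hasCosetCliques_top (hV : Fintype.card V ≤ Fintype.card F) :
    HasCosetCliques V (⊤ : Subgroup Fˣ) := by
  intro c hc
  obtain ⟨f⟩ := Function.Embedding.nonempty_of_card_le hV
  refine ⟨f, fun v w hvw => ?_⟩
  have hne : (f w - f v) / c ≠ 0 := div_ne_zero (sub_ne_zero.2 (f.injective.ne hvw.symm)) hc
  exact ⟨Units.mk0 _ hne, Subgroup.mem_top _, Or.inl (mul_div_cancel₀ _ hc).symm⟩

lemma hasCosetCliques_of_index_pow_le [Nonempty V] (K : Subgroup Fˣ) {m : ℕ}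
    (hm : Fintype.card F - 1 = m * Nat.card K) (hmF : m ^ (2 * Fintype.card V) ≤ Fintype.card F)
    (hF : 4 ^ ((Fintype.card V + 1) * (2 * Fintype.card V)) < Fintype.card F) :
    HasCosetCliques V K := by
  classical
  intro c hc
  rw [Nat.card_eq_fintype_card] at hm
  obtain ⟨v, hv⟩ := exists_clique_of_index_pow_le K hm Fintype.card_pos hmF hF hc
  have hne {i j} (hij : i < j) : v i ≠ v j := fun h => by
    obtain ⟨u, -, hu⟩ := hv i j hij
    rw [h, sub_self] at hu
    exact mul_ne_zero hc u.ne_zero hu.symm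
  have hinj : Function.Injective v := .of_lt_imp_ne fun _ _ => hne
  refine ⟨(Fintype.equivFin V).toEmbedding.trans ⟨v, hinj⟩, fun x y hxy => ?_⟩
  rcases lt_or_gt_of_ne ((Fintype.equivFin V).injective.ne hxy) with hij | hij
  · exact (hv _ _ hij).imp fun u hu => ⟨hu.1, Or.inl hu.2⟩
  · exact (hv _ _ hij).imp fun u hu => ⟨hu.1, Or.inr hu.2⟩

lemma exists_field_card_eq_two_pow {r : ℕ} (hr : r ≠ 0) (hV : Fintype.card V ≤ 2 ^ r) :
    ∃ (F : Type) (_ : Field F) (_ : Fintype F) (u : Fˣ), Fintype.card F = 2 ^ r ∧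
      HasCosetCliques V (Subgroup.zpowers u) ∧ ∀ x : F, x + x = 0 := by
  have := Fintype.ofFinite (GaloisField 2 r)
  have hcard : Fintype.card (GaloisField 2 r) = 2 ^ r := by
    rw [← Nat.card_eq_fintype_card, GaloisField.card 2 r hr]
  obtain ⟨u, hu⟩ := isCyclic_iff_exists_zpowers_eq_top.1
    (inferInstance : IsCyclic (GaloisField 2 r)ˣ)
  refine ⟨GaloisField 2 r, inferInstance, this, u, hcard, ?_, CharTwo.add_self_eq_zero⟩
  rw [hu]
  exact hasCosetCliques_top V (hV.trans hcard.ge)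

lemma exists_field_card_eq_prime [Nonempty V] {p m s : ℕ} (hp : p.Prime)
    (hpm : p - 1 = m * 2 ^ s) (hm : m ^ (2 * Fintype.card V) ≤ p)
    (hpV : 4 ^ ((Fintype.card V + 1) * (2 * Fintype.card V)) < p) :
    ∃ (F : Type) (_ : Field F) (_ : Fintype F) (u : Fˣ), Fintype.card F = p ∧
      HasCosetCliques V (Subgroup.zpowers u) ∧ u ^ 2 ^ s = 1 := by
  have : Fact p.Prime := ⟨hp⟩
  obtain ⟨g, hg⟩ := IsCyclic.exists_ofOrder_eq_natCard (α := (ZMod p)ˣ)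
  rw [Nat.card_eq_fintype_card, ZMod.card_units, hpm] at hg
  have hm0 : m ≠ 0 := by
    rintro rfl
    have := hp.two_le
    omega
  have horder : orderOf (g ^ m) = 2 ^ s := by
    rw [orderOf_pow_of_dvd hm0 (hg ▸ dvd_mul_right _ _), hg,
      Nat.mul_div_cancel_left _ (Nat.pos_of_ne_zero hm0)]
  refine ⟨ZMod p, inferInstance, inferInstance, g ^ m, ZMod.card p, ?_, ?_⟩
  · apply hasCosetCliques_of_index_pow_le V (Subgroup.zpowers (g ^ m)) (m := m) <;>
      simpa only [Nat.card_zpowers, horder, ZMod.card]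
  · rw [← horder, pow_orderOf_eq_one]

end HasCosetCliques

section BlockSizes

lemma nontrivial_of_edgeSet_nonempty {V : Type*} {H : SimpleGraph V} (hH : H.edgeSet.Nonempty) :
    Nontrivial V := by
  obtain ⟨⟨v, w⟩, hvw⟩ := hH
  exact ⟨v, w, H.ne_of_adj hvw⟩

theorem evasive_of_fields {V J : Type} {H : SimpleGraph V} [Fintype J] {F : J → Type}
    [∀ j, Field (F j)] [∀ j, Fintype (F j)] {l : ∀ j, (F j)ˣ} {T : Set J} {n s : ℕ}
    (hH : H.edgeSet.Nonempty) (hn : ∑ j, Fintype.card (F j) = n)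
    (hT : ∀ j ∈ T, ∀ x : F j, x + x = 0) (hprime : ∀ j ∉ T, (Fintype.card (F j)).Prime)
    (hinj : Tᶜ.InjOn fun j => Fintype.card (F j))
    (hlt : ∀ i ∈ T, ∀ j ∉ T, Fintype.card (F i) < Fintype.card (F j))
    (hclique : ∀ j, HasCosetCliques V (Subgroup.zpowers (l j)))
    (hs : ∀ j ∉ T, l j ^ 2 ^ s = 1)
    (hodd : Odd {G : SimpleGraph J | IsEmpty (H →g G)}.ncard) :
    Evasive (ForbiddenSubgraphProperty H n) := by
  classical
  have hcop (i) (hi : i ∈ T) (j) (hj : j ∉ T) :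
      (Fintype.card (F j)).Coprime (orderOf (l i)) := by
    refine Nat.coprime_of_lt_prime (orderOf_pos (l i)).ne' ?_ (hprime j hj)
    calc orderOf (l i) ≤ Fintype.card (F i)ˣ := orderOf_le_card_univ
      _ ≤ Fintype.card (F i) := by rw [Fintype.card_units]; exact Nat.sub_le _ _
      _ < Fintype.card (F j) := hlt i hi j hj
  have e : Fin n ≃ Σ j, F j := Fintype.equivOfCardEq (by simp [hn])
  exact evasive_forbiddenSubgraphProperty_of_not_acyclicComplex e hH <|
    not_acyclicComplex_not_containsCopy hH hT
      (exists_natCast_eq_and_pow_eq_one hprime hinj hcop) hclique hs hodd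

theorem evasive_of_block_sizes {V I K : Type} [Fintype V] [Fintype I] [Fintype K]
    {H : SimpleGraph V} {n t k : ℕ} {r : I → ℕ} {p m s : K → ℕ} (hH : H.edgeSet.Nonempty)
    (hr : ∀ i, Fintype.card V ≤ 2 ^ r i) (hinj : Function.Injective p) (hp : ∀ j, (p j).Prime)
    (hrp : ∀ i j, 2 ^ r i < p j) (hpm : ∀ j, p j - 1 = m j * 2 ^ s j)
    (hm : ∀ j, m j ^ (2 * Fintype.card V) ≤ p j)
    (hpV : ∀ j, 4 ^ ((Fintype.card V + 1) * (2 * Fintype.card V)) < p j)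
    (hn : ∑ i, 2 ^ r i + ∑ j, p j = n) (ht : Fintype.card V ≤ 2 ^ 2 ^ t)
    (hcount : Fintype.card I + Fintype.card K = 1 + k * (2 ^ 2 ^ t - 1)) :
    Evasive (ForbiddenSubgraphProperty H n) := by
  have := nontrivial_of_edgeSet_nonempty hH
  have hr0 (i : I) : r i ≠ 0 := fun h => by
    have := (hr i).trans_lt' (Fintype.one_lt_card (α := V))
    simp [h] at this
  let T : Set (I ⊕ K) := Set.range Sum.inl
  have hfield (j : I ⊕ K) : ∃ (F : Type) (_ : Field F) (_ : Fintype F) (u : Fˣ),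
      Fintype.card F = Sum.elim (2 ^ r ·) p j ∧ HasCosetCliques V (Subgroup.zpowers u) ∧
        (j ∈ T → ∀ x : F, x + x = 0) ∧ (j ∉ T → u ^ 2 ^ ∑ j, s j = 1) := by
    rcases j with i | j
    · obtain ⟨F, _, _, u, hF, hclique, htwo⟩ := exists_field_card_eq_two_pow V (hr0 i) (hr i)
      exact ⟨F, _, _, u, hF, hclique, fun _ => htwo, fun h => absurd ⟨i, rfl⟩ h⟩
    · obtain ⟨F, _, _, u, hF, hclique, hu⟩ :=
        exists_field_card_eq_prime V (hp j) (hpm j) (hm j) (hpV j)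
      refine ⟨F, _, _, u, hF, hclique, fun h => by simp [T] at h, fun _ => ?_⟩
      exact orderOf_dvd_iff_pow_eq_one.1 <| (orderOf_dvd_of_pow_eq_one hu).trans <|
        pow_dvd_pow 2 (Finset.single_le_sum_of_canonicallyOrdered (Finset.mem_univ j))
  choose F _ _ u hF hclique htwo hpow using hfield
  refine evasive_of_fields (T := T) hH (by simpa [hF]) htwo ?_ ?_ ?_ hclique hpow
    (odd_ncard_isEmpty_hom hH ht (by rw [Fintype.card_sum, hcount]))
  · rintro (i | j) hj
    · exact absurd ⟨i, rfl⟩ hj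
    · exact (hF (.inr j)).symm ▸ hp j
  · rintro (i | i) hi (j | j) hj hij <;> simp_all [T, hinj.eq_iff]
  · rintro (i | i) hi (j | j) hj <;> simp_all [T]

end BlockSizes

section NearFermat

lemma NearFermatPrime.exists_factorization {d p : ℕ} (hd : d ≠ 0)
    (hp : NearFermatPrime (1 / d) p) : ∃ m s : ℕ, p - 1 = m * 2 ^ s ∧ m ^ d ≤ p := by
  obtain ⟨_, s, hdvd, hle⟩ := hp
  refine ⟨(p - 1) / 2 ^ s, s, (Nat.div_mul_cancel hdvd).symm, ?_⟩
  have hpow := pow_le_pow_left₀ (Nat.cast_nonneg _) hle d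
  rw [one_div, Real.rpow_inv_natCast_pow (Nat.cast_nonneg p) hd] at hpow
  exact_mod_cast hpow

lemma two_pow_dvd_sub_one {p m s r : ℕ} (hp : 1 < p) (hpm : p - 1 = m * 2 ^ s) (hm : m ^ 2 ≤ p)
    (hr : (2 ^ r) ^ 2 < p) : 2 ^ r ∣ p - 1 := by
  rw [hpm]
  refine Dvd.dvd.mul_left (pow_dvd_pow 2 ?_) m
  by_contra! hlt
  have hs : 2 ^ s * 2 ≤ 2 ^ r := by
    rw [← pow_succ]
    exact Nat.pow_le_pow_right two_pos hlt
  have hle : p ≤ m * 2 ^ r := by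
    have := Nat.mul_le_mul_left m hs
    rw [← mul_assoc, ← hpm] at this
    omega
  nlinarith

lemma exists_seq_nearFermatPrime {d : ℕ} (hd : 2 ≤ d)
    (hinf : {p : ℕ | NearFermatPrime (1 / d) p}.Infinite) (B r : ℕ) :
    ∃ p m s : ℕ → ℕ, Function.Injective p ∧ (∀ i, (p i).Prime) ∧ (∀ i, B < p i) ∧
      (∀ i, p i - 1 = m i * 2 ^ s i) ∧ (∀ i, m i ^ d ≤ p i) ∧ ∀ i, p i ≡ 1 [MOD 2 ^ r] := by
  let f := (hinf.sdiff (Set.finite_Iic (B + (2 ^ r) ^ 2))).natEmbedding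
  have hlarge (i : ℕ) : B + (2 ^ r) ^ 2 < f i := not_le.1 (f i).2.2
  have hprime (i : ℕ) : (f i : ℕ).Prime := (f i).2.1.1
  choose m s hpm hm using fun i =>
    NearFermatPrime.exists_factorization (by omega) (f i).2.1
  refine ⟨fun i => f i, m, s, Subtype.val_injective.comp f.injective, hprime,
    fun i => (Nat.le_add_right _ _).trans_lt (hlarge i), hpm, hm, fun i => ?_⟩
  refine ((Nat.modEq_iff_dvd' (hprime i).one_lt.le).2 (two_pow_dvd_sub_one (hprime i).one_lt
    (hpm i) ?_ ((Nat.le_add_left _ _).trans_lt (hlarge i)))).symm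
  obtain h0 | hpos := (m i).eq_zero_or_pos
  · simp [h0]
  · exact (Nat.pow_le_pow_right hpos hd).trans (hm i)

lemma exists_mul_add_two_mul_add_eq {q P n : ℕ} (hq : 2 ≤ q) (c : ℕ) (hmod : P ≡ n [MOD q])
    (hn : P + q * (2 * q) ≤ n) :
    ∃ a b k : ℕ, a * q + b * (2 * q) + P = n ∧ a + b + c = 1 + k * (q - 1) := by
  obtain ⟨M, hM⟩ := (Nat.modEq_iff_dvd' (by omega)).1 hmod
  have hM2 : 2 * q ≤ M := Nat.le_of_mul_le_mul_left (by omega : q * (2 * q) ≤ q * M) (by omega)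
  let b := (M + c - 1) % (q - 1)
  have hb : b < q - 1 := Nat.mod_lt _ (by omega)
  have hdiv := Nat.div_add_mod' (M + c - 1) (q - 1)
  refine ⟨M - 2 * b, b, (M + c - 1) / (q - 1), ?_, by omega⟩
  have hsum : (M - 2 * b) * q + b * (2 * q) = q * M := by
    calc (M - 2 * b) * q + b * (2 * q) = q * (M - 2 * b + 2 * b) := by ring
      _ = q * M := by rw [Nat.sub_add_cancel (by omega)]
  omega

lemma sum_range_mod_modEq {q : ℕ} {p : ℕ → ℕ} (hp : ∀ i, p i ≡ 1 [MOD q]) (n : ℕ) :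
    ∑ i ∈ Finset.range (n % q), p i ≡ n [MOD q] := by
  have hsum : ∑ i ∈ Finset.range (n % q), p i ≡ n % q [MOD q] := by
    simpa using Nat.ModEq.sum (s := Finset.range (n % q)) fun i _ => hp i
  exact hsum.trans (Nat.mod_modEq n q)

theorem eventually_evasive_of_seq_primes {V : Type} [Fintype V] {H : SimpleGraph V} {t : ℕ}
    {p m s : ℕ → ℕ} (hH : H.edgeSet.Nonempty) (ht : Fintype.card V ≤ 2 ^ 2 ^ t)
    (hinj : Function.Injective p) (hp : ∀ i, (p i).Prime) (htp : ∀ i, 2 * 2 ^ 2 ^ t < p i)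
    (hpm : ∀ i, p i - 1 = m i * 2 ^ s i) (hm : ∀ i, m i ^ (2 * Fintype.card V) ≤ p i)
    (hpV : ∀ i, 4 ^ ((Fintype.card V + 1) * (2 * Fintype.card V)) < p i)
    (hmod : ∀ i, p i ≡ 1 [MOD 2 ^ 2 ^ t]) :
    ∃ N : ℕ, ∀ n : ℕ, N ≤ n → Evasive (ForbiddenSubgraphProperty H n) := by
  have hq : 2 ≤ 2 ^ 2 ^ t := Nat.le_self_pow (pow_ne_zero t two_ne_zero) 2
  refine ⟨∑ i ∈ Finset.range (2 ^ 2 ^ t), p i + 2 ^ 2 ^ t * (2 * 2 ^ 2 ^ t), fun n hn => ?_⟩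
  let c := n % 2 ^ 2 ^ t
  have hc : c < 2 ^ 2 ^ t := Nat.mod_lt n (by positivity)
  have hsum : ∑ i ∈ Finset.range c, p i ≤ ∑ i ∈ Finset.range (2 ^ 2 ^ t), p i :=
    Finset.sum_le_sum_of_subset (Finset.range_subset_range.2 hc.le)
  obtain ⟨a, b, k, hn', hcount⟩ := exists_mul_add_two_mul_add_eq hq c
    (sum_range_mod_modEq hmod n) ((Nat.add_le_add_right hsum _).trans hn)
  refine evasive_of_block_sizes (I := Fin a ⊕ Fin b) (K := Fin c)
    (r := Sum.elim (fun _ => 2 ^ t) fun _ => 2 ^ t + 1) (p := fun i => p i) (m := fun i => m i)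
    (s := fun i => s i) (t := t) (k := k) hH ?_ (hinj.comp Fin.val_injective) (fun i => hp i) ?_
    (fun i => hpm i) (fun i => hm i) (fun i => hpV i) ?_ ht (by simpa using hcount)
  · rintro (_ | _)
    · exact ht
    · exact ht.trans (Nat.pow_le_pow_right two_pos (Nat.le_succ _))
  · rintro (_ | _) j
    · exact (Nat.le_mul_of_pos_left _ two_pos).trans_lt (htp j)
    · exact (pow_succ' 2 (2 ^ t)).trans_lt (htp j)
  · rw [Fin.sum_univ_eq_sum_range p c, Fintype.sum_sum_type, ← hn']
    simp [pow_succ', c]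

end NearFermat

/-- If `H` has `h` vertices and at least one edge, and there are infinitely many
`1/(2h)`-near Fermat primes, then `Q_n^H` is eventually evasive. -/
theorem forbidden_subgraph_eventually_evasive_of_near_fermat
    {V : Type} [Fintype V] (H : SimpleGraph V) (h : ℕ) (hcard : Fintype.card V = h)
    (hH : H.edgeSet.Nonempty)
    (hinf : {p : ℕ | NearFermatPrime (1 / (2 * (h : ℝ))) p}.Infinite) :
    ∃ N : ℕ, ∀ n : ℕ, N ≤ n → Evasive (ForbiddenSubgraphProperty H n) := by
  subst hcard
  set h := Fintype.card V
  have := nontrivial_of_edgeSet_nonempty hH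
  have hh : 0 < h := Fintype.card_pos
  have hhq : h ≤ 2 ^ 2 ^ h := Nat.lt_two_pow_self.le.trans Nat.lt_two_pow_self.le
  obtain ⟨p, m, s, hinj, hprime, hlarge, hpm, hm, hmod⟩ := exists_seq_nearFermatPrime
    (d := 2 * h) (by omega) (by exact_mod_cast hinf)
    (2 * 2 ^ 2 ^ h + 4 ^ ((h + 1) * (2 * h))) (2 ^ h)
  exact eventually_evasive_of_seq_primes hH hhq hinj hprime
    (fun i => (Nat.le_add_right _ _).trans_lt (hlarge i)) hpm hm
    (fun i => (Nat.le_add_left _ _).trans_lt (hlarge i)) hmod
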